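/- arXiv:1805.00708 — 6 statements merged into one kernel-verified Lean document; each statement's English description precedes it below -/
import Mathlib

section
/- Let μ be the beta Hermite ensemble on ℝⁿ with density proportional to e^{−(n/2)|x|²} ∏_{i<j}(x_i − x_j)^β on the Weyl chamber {x₁ ≥ … ≥ xₙ}, β > 0. If X = (X₁,…,Xₙ) is distributed according to μ, then X₁ + ⋯ + Xₙ has the standard Gaussian law N(0,1). -/
open MeasureTheory Real Set ProbabilityTheory
open scoped ENNReal BigOperators

/-!
The law of the sum `S = X₁ + ⋯ + Xₙ` is identified through its moment generating function, which is
computed by translating along the diagonal. The Weyl chamber and the differences `xᵢ - xⱼ` are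
invariant under `x ↦ x + c (1, …, 1)`, while `|x + c (1, …, 1)|² = |x|² + 2 c S(x) + n c²`. With
`c = -t / n` the density is therefore multiplied by `exp (t S(x) - t² / 2)`
(`betaHermite_translate`). Since Lebesgue measure is translation invariant, integrating gives
`E[exp (t S)] = exp (t² / 2)` for every real `t`. A moment generating function that is finite on
the whole line determines the law (`map_eq_gaussianReal_of_mgf`).
-/

/-- Finiteness of the measure and of all exponential moments need not be assumed: a
non-integrable function has integral zero, whereas the prescribed values are positive. -/
lemma map_eq_gaussianReal_of_mgf {Ω : Type*} [MeasurableSpace Ω] {μ : Measure Ω} {X : Ω → ℝ}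
    (hX : AEMeasurable X μ) (h : ∀ t, mgf X μ t = Real.exp (t ^ 2 / 2)) :
    μ.map X = gaussianReal 0 1 := by
  have hprob : IsProbabilityMeasure μ := by
    have h0 := h 0
    rw [mgf_zero'] at h0
    refine ⟨?_⟩
    simpa [Measure.real, ENNReal.toReal_eq_one_iff] using h0
  have hset : integrableExpSet X μ = Set.univ := by
    ext t
    simp only [integrableExpSet, Set.mem_ofPred_eq, Set.mem_univ, iff_true]
    refine Integrable.of_integral_ne_zero ?_
    have ht := h t
    rw [mgf] at ht
    rw [ht]
    exact (Real.exp_pos _).ne'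
  have hmgf : mgf X μ = mgf id (gaussianReal 0 1) := by
    ext t
    rw [h t, mgf_id_gaussianReal]
    simp
  have hc : complexMGF X μ = complexMGF id (gaussianReal 0 1) := by
    ext z
    exact eqOn_complexMGF_of_mgf hmgf (by simp [hset])
  simpa using Measure.ext_of_complexMGF_eq hX aemeasurable_id hc

/-- The effect of a translation along the diagonal on the unnormalized density: everything except
the Gaussian factor is invariant. -/
lemma betaHermite_translate {n : ℕ} (hn : 0 < n) (β t : ℝ) (x : EuclideanSpace ℝ (Fin n)) :
    ({x | ∀ i j : Fin n, i < j → x j < x i} : Set (EuclideanSpace ℝ (Fin n))).indicator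
      (fun x => Real.exp (-(n / 2 : ℝ) * ‖x‖ ^ 2) *
        ∏ i : Fin n, ∏ j : Fin n, if i < j then (x i - x j) ^ β else 1)
      (x + WithLp.toLp 2 fun _ => -t / n) =
    Real.exp (t * ∑ i, x i - t ^ 2 / 2) *
    ({x | ∀ i j : Fin n, i < j → x j < x i} : Set (EuclideanSpace ℝ (Fin n))).indicator
      (fun x => Real.exp (-(n / 2 : ℝ) * ‖x‖ ^ 2) *
        ∏ i : Fin n, ∏ j : Fin n, if i < j then (x i - x j) ^ β else 1) x := by
  have hn' : (n : ℝ) ≠ 0 := by positivity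
  have hnorm : -(n / 2 : ℝ) * ‖x + WithLp.toLp 2 fun _ : Fin n => -t / n‖ ^ 2 =
      (t * ∑ i, x i - t ^ 2 / 2) + -(n / 2 : ℝ) * ‖x‖ ^ 2 := by
    simp only [EuclideanSpace.real_norm_sq_eq, PiLp.add_apply, add_sq, Finset.sum_add_distrib,
      ← Finset.sum_mul, ← Finset.mul_sum, Finset.sum_const, Finset.card_univ, Fintype.card_fin,
      nsmul_eq_mul]
    field_simp
    ring
  simp only [Set.indicator_apply, Set.mem_ofPred_eq, hnorm, Real.exp_add, PiLp.add_apply,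
    add_lt_add_iff_right, add_sub_add_right_eq_sub, mul_ite, mul_zero, mul_assoc]

/-- For the beta Hermite ensemble `μ` on `ℝⁿ` (density proportional to
`exp(-(n/2)|x|²) ∏_{i<j}(xᵢ-xⱼ)^β` on the Weyl chamber), the sum of coordinates
`X₁ + ⋯ + Xₙ` follows the standard Gaussian law `N(0,1)`. -/
theorem beta_hermite_sum_is_standard_gaussian
    {n : ℕ} (hn : 0 < n) (β : ℝ) (hβ : 0 < β)
    (D : Set (EuclideanSpace ℝ (Fin n)))
    (hD : D = {x | ∀ i j : Fin n, i < j → x j < x i})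
    (dens : EuclideanSpace ℝ (Fin n) → ℝ)
    (hdens : dens = D.indicator fun x =>
      Real.exp (-(n / 2 : ℝ) * ‖x‖ ^ 2) *
        ∏ i : Fin n, ∏ j : Fin n, if i < j then (x i - x j) ^ β else 1)
    (hint : Integrable dens volume)
    (Z : ℝ) (hZ : Z = ∫ x, dens x) (hZpos : 0 < Z)
    (μ : Measure (EuclideanSpace ℝ (Fin n)))
    (hμ : μ = volume.withDensity fun x => ENNReal.ofReal (dens x / Z)) :
    μ.map (fun x => ∑ i : Fin n, x i) = gaussianReal 0 1 := by
  have hS : Measurable fun x : EuclideanSpace ℝ (Fin n) => ∑ i, x i := by fun_prop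
  refine map_eq_gaussianReal_of_mgf hS.aemeasurable fun t => ?_
  have hnn : ∀ x, 0 ≤ dens x := by
    intro x
    rw [hdens]
    refine Set.indicator_nonneg (fun y hy => ?_) x
    rw [hD] at hy
    refine mul_nonneg (Real.exp_pos _).le
      (Finset.prod_nonneg fun i _ => Finset.prod_nonneg fun j _ => ?_)
    split_ifs with hij
    · exact Real.rpow_nonneg (sub_nonneg.2 (hy i j hij).le) _
    · exact zero_le_one
  have htr : ∀ x, dens (x + WithLp.toLp 2 fun _ => -t / n) =
      Real.exp (t * ∑ i, x i - t ^ 2 / 2) * dens x := by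
    intro x
    rw [hdens, hD]
    exact betaHermite_translate hn β t x
  have hmeas : AEMeasurable (fun x => ENNReal.ofReal (dens x / Z)) volume :=
    (hint.aestronglyMeasurable.aemeasurable.div_const Z).ennreal_ofReal
  rw [mgf, hμ, integral_withDensity_eq_integral_toReal_smul₀ hmeas (by simp)]
  calc ∫ x, (ENNReal.ofReal (dens x / Z)).toReal • Real.exp (t * ∑ i, x i)
      = ∫ x, (Real.exp (t ^ 2 / 2) / Z) * dens (x + WithLp.toLp 2 fun _ => -t / n) := by
        refine integral_congr_ae (ae_of_all _ fun x => ?_)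
        simp only [smul_eq_mul]
        rw [ENNReal.toReal_ofReal (div_nonneg (hnn x) hZpos.le), htr, Real.exp_sub]
        field_simp
    _ = Real.exp (t ^ 2 / 2) := by
        rw [integral_const_mul, integral_add_right_eq_self dens, ← hZ]
        field_simp
end

section
/- Let μ be the probability measure on ℝⁿ with density proportional to exp(−(ρ/2)|x|² − Σ_{i<j} W(x_i − x_j)) for some ρ > 0, where W : ℝ → ℝ ∪ {+∞} is convex with domain (0,∞) and the normalizing constant is finite. Then for every λ, c ∈ ℝ, the function f(x) = λ(x₁ + ⋯ + xₙ) + c achieves equality in the Poincaré inequality: Var_μ(f) = (1/ρ) ∫_{ℝⁿ} |∇f|² dμ. -/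
open MeasureTheory Real Set
open scoped ENNReal BigOperators

/-!
Write `S x = x₁ + ⋯ + xₙ` and `𝟙 = (1, …, 1)`. The interaction and the cone `D` are invariant under
`x ↦ x + t𝟙`, while `|x + t𝟙|² = |x|² + 2tS(x) + nt²`; hence
`dens (x + t𝟙) = exp(-ρtS(x) - ρnt²/2) · dens x` (`dens_shift`). Translation invariance of Lebesgue
measure turns this into `∫ exp(sS) dμ = exp((n/ρ)s²/2)` for every real `s`: under `μ`, the
statistic `S` has the moment generating function of a centred Gaussian of variance `n/ρ`.
Differentiating at `0` gives `∫ S dμ = 0` and `∫ S² dμ = n/ρ` (`moments_of_gaussian_mgf`), so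
`Var_μ(λS + c) = λ²n/ρ`, and `∇f = λ𝟙` has squared norm `λ²n`.
-/

open ProbabilityTheory in
/-- The first two moments of a random variable with a centred Gaussian moment generating function;
positivity of the mgf at every `t` encodes that all exponential moments are finite. -/
lemma moments_of_gaussian_mgf {Ω : Type*} [MeasurableSpace Ω] {μ : Measure Ω}
    [IsProbabilityMeasure μ] {X : Ω → ℝ} {v : NNReal}
    (h : ∀ t, mgf X μ t = Real.exp (v * t ^ 2 / 2)) :
    MemLp X 2 μ ∧ ∫ x, X x ∂μ = 0 ∧ ∫ x, X x ^ 2 ∂μ = v := by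
  have hset : integrableExpSet X μ = univ := by
    refine eq_univ_of_forall fun t => ?_
    change Integrable _ μ
    rw [← mgf_pos_iff, h]
    positivity
  have h0 : (0 : ℝ) ∈ interior (integrableExpSet X μ) := by simp [hset]
  have hset' : (0 : ℝ) ∈ interior (integrableExpSet id (gaussianReal 0 v)) := by
    simp
  have hm : mgf X μ = mgf id (gaussianReal 0 v) := by
    rw [mgf_id_gaussianReal]
    ext t
    rw [h]
    simp
  refine ⟨memLp_of_mem_interior_integrableExpSet h0 2, ?_, ?_⟩
  · rw [← deriv_mgf_zero h0, hm, deriv_mgf_zero hset']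
    simp
  · have h1 : ∫ x, X x ^ 2 ∂μ = ∫ x, id x ^ 2 ∂(gaussianReal 0 v) := by
      have e1 := iteratedDeriv_mgf_zero h0 2
      have e2 := iteratedDeriv_mgf_zero hset' 2
      rw [hm, e2] at e1
      simpa using e1.symm
    have h2 := variance_eq_sub (memLp_id_gaussianReal (μ := 0) (v := v) 2)
    rw [variance_id_gaussianReal] at h2
    rw [h1, h2]
    simp

/-- The vector `(1, …, 1)`. -/
noncomputable def onesVec (n : ℕ) : EuclideanSpace ℝ (Fin n) := WithLp.toLp 2 fun _ => 1

lemma onesVec_apply {n : ℕ} (i : Fin n) : onesVec n i = 1 := rfl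

lemma norm_onesVec_sq (n : ℕ) : ‖onesVec n‖ ^ 2 = n := by
  simp [EuclideanSpace.norm_sq_eq, onesVec_apply]

lemma inner_onesVec {n : ℕ} (x : EuclideanSpace ℝ (Fin n)) :
    inner ℝ (onesVec n) x = ∑ i, x i := by
  simp [PiLp.inner_apply, onesVec_apply]

lemma dens_shift {n : ℕ} {ρ : ℝ} {W : ℝ → ℝ} {U : EuclideanSpace ℝ (Fin n) → ℝ}
    (hU : ∀ x, U x = ρ / 2 * ‖x‖ ^ 2
      + ∑ i : Fin n, ∑ j : Fin n, if i < j then W (x i - x j) else 0)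
    {D : Set (EuclideanSpace ℝ (Fin n))}
    (hD : D = {x | ∀ i j : Fin n, i < j → x j < x i})
    {dens : EuclideanSpace ℝ (Fin n) → ℝ}
    (hdens : dens = D.indicator fun x => Real.exp (-U x))
    (t : ℝ) (x : EuclideanSpace ℝ (Fin n)) :
    dens (x + t • onesVec n)
      = Real.exp (-(ρ * t * ∑ i, x i) - ρ * n * t ^ 2 / 2) * dens x := by
  have hc : ∀ i, (x + t • onesVec n) i = x i + t := fun i => by simp [onesVec_apply]
  have hmem : x + t • onesVec n ∈ D ↔ x ∈ D := by
    simp [hD, onesVec_apply]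
  have hn : ‖x + t • onesVec n‖ ^ 2 = ‖x‖ ^ 2 + 2 * t * ∑ i, x i + n * t ^ 2 := by
    rw [norm_add_sq_real, inner_smul_right, real_inner_comm, inner_onesVec, norm_smul, mul_pow,
      norm_onesVec_sq, Real.norm_eq_abs, sq_abs]
    ring
  rw [hdens]
  by_cases hx : x ∈ D
  · rw [indicator_of_mem (hmem.2 hx), indicator_of_mem hx, ← Real.exp_add, hU, hU, hn]
    simp only [hc, add_sub_add_right_eq_sub]
    congr 1
    ring
  · rw [indicator_of_notMem (fun h => hx (hmem.1 h)), indicator_of_notMem hx, mul_zero]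

theorem poincare_equality_for_linear_statistic
    {n : ℕ} (ρ : ℝ) (hρ : 0 < ρ) (W : ℝ → ℝ)
    (hW : ConvexOn ℝ (Set.Ioi (0 : ℝ)) W)
    (U : EuclideanSpace ℝ (Fin n) → ℝ)
    (hU : ∀ x, U x = ρ / 2 * ‖x‖ ^ 2
      + ∑ i : Fin n, ∑ j : Fin n, if i < j then W (x i - x j) else 0)
    (D : Set (EuclideanSpace ℝ (Fin n)))
    (hD : D = {x | ∀ i j : Fin n, i < j → x j < x i})
    (dens : EuclideanSpace ℝ (Fin n) → ℝ)
    (hdens : dens = D.indicator fun x => Real.exp (-U x))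
    (hint : Integrable dens volume)
    (Z : ℝ) (hZ : Z = ∫ x, dens x) (hZpos : 0 < Z)
    (μ : Measure (EuclideanSpace ℝ (Fin n)))
    (hμ : μ = volume.withDensity fun x => ENNReal.ofReal (dens x / Z))
    (lam c : ℝ)
    (f : EuclideanSpace ℝ (Fin n) → ℝ)
    (hf : ∀ x, f x = lam * (∑ i : Fin n, x i) + c) :
    (∫ x, f x ^ 2 ∂μ) - (∫ x, f x ∂μ) ^ 2
      = (1 / ρ) * ∫ x, ‖gradient f x‖ ^ 2 ∂μ := by
  have hd0 : ∀ x, 0 ≤ dens x := fun x => by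
    rw [hdens]
    exact indicator_nonneg (fun _ _ => (Real.exp_pos _).le) x
  have hq0 : ∀ x, 0 ≤ dens x / Z := fun x => div_nonneg (hd0 x) hZpos.le
  have hI : ∀ g : EuclideanSpace ℝ (Fin n) → ℝ,
      ∫ x, g x ∂μ = ∫ x, dens x / Z * g x := fun g => by
    rw [hμ, integral_withDensity_eq_integral_toReal_smul₀
      (hint.div_const Z).aestronglyMeasurable.aemeasurable.ennreal_ofReal (by simp)]
    simp only [ENNReal.toReal_ofReal (hq0 _), smul_eq_mul]
  have : IsProbabilityMeasure μ := by
    constructor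
    rw [hμ, withDensity_apply _ MeasurableSet.univ, Measure.restrict_univ,
      ← ofReal_integral_eq_lintegral_ofReal (hint.div_const Z) (ae_of_all _ hq0),
      integral_div, ← hZ, div_self hZpos.ne', ENNReal.ofReal_one]
  set S : EuclideanSpace ℝ (Fin n) → ℝ := fun x => ∑ i, x i with hS
  have hv : (((n / ρ).toNNReal : NNReal) : ℝ) = n / ρ :=
    Real.coe_toNNReal _ (by positivity)
  obtain ⟨hL2, h1, h2⟩ := moments_of_gaussian_mgf (μ := μ) (X := S) (v := (n / ρ).toNNReal) <| by
    intro s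
    rw [hv, ProbabilityTheory.mgf, hI]
    -- Translate by `-(s / ρ) • 𝟙`, the shift that produces the factor `exp (s * S x)`.
    have key : ∀ x, dens x / Z * Real.exp (s * S x)
        = Real.exp (n / ρ * s ^ 2 / 2) / Z * dens (x + (-(s / ρ)) • onesVec n) := fun x => by
      rw [dens_shift hU hD hdens]
      have : s * S x = n / ρ * s ^ 2 / 2
          + (-(ρ * -(s / ρ) * ∑ i, x i) - ρ * n * (-(s / ρ)) ^ 2 / 2) := by
        simp only [hS]
        field_simp
        ring
      rw [this, Real.exp_add]
      ring
    simp only [key]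
    rw [integral_const_mul, integral_add_right_eq_self dens, ← hZ, div_mul_cancel₀ _ hZpos.ne']
  have hf' : f = fun x => lam * S x + c := funext hf
  have hg : ∀ x, gradient f x = lam • onesVec n := fun x => by
    refine HasGradientAt.gradient ?_
    rw [hasGradientAt_iff_hasFDerivAt]
    have : f = fun x => (InnerProductSpace.toDual ℝ _ (lam • onesVec n)) x + c := by
      ext y
      rw [hf y, InnerProductSpace.toDual_apply_apply, inner_smul_left, inner_onesVec]
      simp
    rw [this]
    exact (ContinuousLinearMap.hasFDerivAt _).add_const c
  have hi1 : Integrable S μ := hL2.integrable (by norm_num)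
  have hi2 : Integrable (fun x => S x ^ 2) μ := hL2.integrable_sq
  have e1 : ∫ x, f x ∂μ = c := by
    rw [hf', integral_add (hi1.const_mul _) (integrable_const _), integral_const_mul, h1]
    simp
  have e2 : ∫ x, f x ^ 2 ∂μ = lam ^ 2 * (n / ρ) + c ^ 2 := by
    have : ∀ x, f x ^ 2 = lam ^ 2 * S x ^ 2 + 2 * lam * c * S x + c ^ 2 := fun x => by
      rw [hf']
      ring
    simp only [this]
    have hi3 : Integrable (fun x => lam ^ 2 * S x ^ 2 + 2 * lam * c * S x) μ :=
      (hi2.const_mul _).add (hi1.const_mul _)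
    rw [integral_add hi3 (integrable_const _),
      integral_add (hi2.const_mul _) (hi1.const_mul _), integral_const_mul, integral_const_mul,
      h1, h2, hv]
    simp
  simp only [hg, norm_smul, mul_pow, norm_onesVec_sq, Real.norm_eq_abs, sq_abs]
  rw [e1, e2]
  simp
  ring
end

section
/- Let μ be the probability measure on ℝⁿ with density proportional to exp(−(ρ/2)|x|² − Σ_{i<j} W(x_i − x_j)) for some ρ > 0, where W : ℝ → ℝ ∪ {+∞} is convex with domain (0,∞) and the normalizing constant is finite. Then for every λ, c ∈ ℝ, the function f(x) = exp(λ(x₁ + ⋯ + xₙ) + c) achieves equality in the logarithmic Sobolev inequality: Ent_μ(f²) = (2/ρ) ∫_{ℝⁿ} |∇f|² dμ. -/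
/-!
The interaction and the domain `D` only see differences of coordinates, so translating by a multiple
of the all-ones vector `e` changes the weight `exp (-U)` only through its Gaussian factor:
`dens (x - t • e) * exp (ρ n t² / 2) = dens x * exp (ρ t ∑ xᵢ)`.
By translation invariance of Lebesgue measure, the linear statistic `s x = ∑ xᵢ` has under `μ` the
moment generating function `τ ↦ exp (n τ² / (2ρ))` of a centered Gaussian with variance `n / ρ`.
Its value at `2 * lam` gives `∫ f²`, its derivative there gives `∫ s f²` and thus the entropy, while
`|∇f|² = n lam² f²` pointwise; both sides then equal `(2 n lam² / ρ) ∫ f²`.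
-/

open MeasureTheory Real Set
open scoped ENNReal BigOperators

/-- The coordinate sum is the inner product with the all-ones vector, whose squared norm is `n`;
hence the gradient of an exponential of it has squared norm `n * lam ^ 2` times the squared value. -/
lemma norm_gradient_exp_sum_sq {n : ℕ} (lam c : ℝ) (x : EuclideanSpace ℝ (Fin n)) :
    ‖gradient (fun y : EuclideanSpace ℝ (Fin n) => Real.exp (lam * (∑ i, y i) + c)) x‖ ^ 2
      = n * lam ^ 2 * Real.exp (lam * (∑ i, x i) + c) ^ 2 := by
  set e : EuclideanSpace ℝ (Fin n) := WithLp.toLp 2 (fun _ => (1 : ℝ)) with he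
  have hs : ∀ y : EuclideanSpace ℝ (Fin n), ∑ i, y i = inner ℝ e y := by
    intro y
    simp [PiLp.inner_apply, he]
  have hg : HasGradientAt (fun y : EuclideanSpace ℝ (Fin n) => Real.exp (lam * (∑ i, y i) + c))
      ((Real.exp (lam * (∑ i, x i) + c) * lam) • e) x := by
    rw [hasGradientAt_iff_hasFDerivAt]
    simp only [hs]
    have h := ((((innerSL ℝ e).hasFDerivAt (x := x)).const_mul lam).add_const c).exp
    refine h.congr_fderiv ?_
    ext y
    simp [mul_assoc]
  have hn : ‖e‖ ^ 2 = n := by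
    rw [EuclideanSpace.norm_sq_eq]
    simp [he]
  rw [hg.gradient, norm_smul, mul_pow, hn, Real.norm_eq_abs, sq_abs]
  ring

/-- Shifting all coordinates by the same `t` tilts the Gibbs weight by an exponential of the
coordinate sum. -/
lemma gibbs_weight_shift {n : ℕ} (ρ : ℝ) (W : ℝ → ℝ)
    (U : EuclideanSpace ℝ (Fin n) → ℝ)
    (hU : ∀ x, U x = ρ / 2 * ‖x‖ ^ 2
      + ∑ i : Fin n, ∑ j : Fin n, if i < j then W (x i - x j) else 0)
    (D : Set (EuclideanSpace ℝ (Fin n)))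
    (hD : D = {x | ∀ i j : Fin n, i < j → x j < x i})
    (t : ℝ) (x : EuclideanSpace ℝ (Fin n)) :
    D.indicator (fun x => Real.exp (-U x)) x * Real.exp (ρ * t * ∑ i, x i)
      = Real.exp (ρ * n * t ^ 2 / 2)
        * D.indicator (fun x => Real.exp (-U x)) (x - WithLp.toLp 2 (fun _ => t)) := by
  have hmem : x - WithLp.toLp 2 (fun _ => t) ∈ D ↔ x ∈ D := by
    simp [hD]
  by_cases hx : x ∈ D
  · rw [indicator_of_mem hx, indicator_of_mem (hmem.2 hx), ← Real.exp_add, ← Real.exp_add]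
    congr 1
    have hnorm : ‖x - WithLp.toLp 2 (fun _ => t)‖ ^ 2
        = ‖x‖ ^ 2 - 2 * t * ∑ i, x i + n * t ^ 2 := by
      simp only [EuclideanSpace.norm_sq_eq, Real.norm_eq_abs, sq_abs, PiLp.sub_apply, sub_sq,
        Finset.sum_add_distrib, Finset.sum_sub_distrib, Finset.mul_sum]
      simp [mul_comm, mul_assoc]
    simp only [hU, hnorm, PiLp.sub_apply, sub_sub_sub_cancel_right]
    ring
  · rw [indicator_of_notMem hx, indicator_of_notMem (fun h => hx (hmem.1 h))]
    simp

/-- Under the Gibbs measure the coordinate sum has the moment generating function of a centered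
Gaussian of variance `n / ρ`. -/
lemma mgf_sum_gibbs {n : ℕ} (ρ : ℝ) (hρ : 0 < ρ) (W : ℝ → ℝ)
    (U : EuclideanSpace ℝ (Fin n) → ℝ)
    (hU : ∀ x, U x = ρ / 2 * ‖x‖ ^ 2
      + ∑ i : Fin n, ∑ j : Fin n, if i < j then W (x i - x j) else 0)
    (D : Set (EuclideanSpace ℝ (Fin n)))
    (hD : D = {x | ∀ i j : Fin n, i < j → x j < x i})
    (dens : EuclideanSpace ℝ (Fin n) → ℝ)
    (hdens : dens = D.indicator fun x => Real.exp (-U x))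
    (hint : Integrable dens volume)
    (Z : ℝ) (hZ : Z = ∫ x, dens x) (hZpos : 0 < Z)
    (μ : Measure (EuclideanSpace ℝ (Fin n)))
    (hμ : μ = volume.withDensity fun x => ENNReal.ofReal (dens x / Z)) (τ : ℝ) :
    ProbabilityTheory.mgf (fun x : EuclideanSpace ℝ (Fin n) => ∑ i, x i) μ τ
      = Real.exp (n * τ ^ 2 / (2 * ρ)) := by
  have hnn : ∀ x, 0 ≤ dens x := fun x => by
    rw [hdens]
    exact indicator_nonneg (fun _ _ => (Real.exp_pos _).le) x
  have hpt : ∀ x : EuclideanSpace ℝ (Fin n),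
      (ENNReal.ofReal (dens x / Z)).toReal • Real.exp (τ * ∑ i, x i)
        = (Real.exp (n * τ ^ 2 / (2 * ρ)) / Z)
          * dens (x - WithLp.toLp 2 (fun _ => τ / ρ)) := by
    intro x
    have h := gibbs_weight_shift ρ W U hU D hD (τ / ρ) x
    rw [← hdens, mul_div_cancel₀ τ hρ.ne'] at h
    have h2 : ρ * n * (τ / ρ) ^ 2 / 2 = n * τ ^ 2 / (2 * ρ) := by
      field_simp
    rw [h2] at h
    rw [ENNReal.toReal_ofReal (div_nonneg (hnn x) hZpos.le), smul_eq_mul, div_mul_eq_mul_div, h]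
    ring
  rw [ProbabilityTheory.mgf, hμ, integral_withDensity_eq_integral_toReal_smul₀
    (hint.aemeasurable.div_const Z).ennreal_ofReal (by simp)]
  simp_rw [hpt]
  rw [integral_const_mul, integral_sub_right_eq_self dens, ← hZ, div_mul_cancel₀ _ hZpos.ne']

/-- **Optimality in the logarithmic Sobolev inequality**: for a Boltzmann–Gibbs measure `μ` on `ℝⁿ`
with quadratic confinement `V = ρ|·|²/2` and convex interaction `W` with domain `(0,∞)`,
the function `f(x) = exp(λ(x₁ + ⋯ + xₙ) + c)` achieves equality:
`Ent_μ(f²) = (2/ρ) ∫ |∇f|² dμ`. -/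
theorem log_sobolev_equality_for_exponential_of_linear_statistic
    {n : ℕ} (ρ : ℝ) (hρ : 0 < ρ) (W : ℝ → ℝ)
    (hW : ConvexOn ℝ (Set.Ioi (0 : ℝ)) W)
    (U : EuclideanSpace ℝ (Fin n) → ℝ)
    (hU : ∀ x, U x = ρ / 2 * ‖x‖ ^ 2
      + ∑ i : Fin n, ∑ j : Fin n, if i < j then W (x i - x j) else 0)
    (D : Set (EuclideanSpace ℝ (Fin n)))
    (hD : D = {x | ∀ i j : Fin n, i < j → x j < x i})
    (dens : EuclideanSpace ℝ (Fin n) → ℝ)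
    (hdens : dens = D.indicator fun x => Real.exp (-U x))
    (hint : Integrable dens volume)
    (Z : ℝ) (hZ : Z = ∫ x, dens x) (hZpos : 0 < Z)
    (μ : Measure (EuclideanSpace ℝ (Fin n)))
    (hμ : μ = volume.withDensity fun x => ENNReal.ofReal (dens x / Z))
    (lam c : ℝ)
    (f : EuclideanSpace ℝ (Fin n) → ℝ)
    (hf : ∀ x, f x = Real.exp (lam * (∑ i : Fin n, x i) + c)) :
    (∫ x, f x ^ 2 * Real.log (f x ^ 2) ∂μ)
        - (∫ x, f x ^ 2 ∂μ) * Real.log (∫ x, f x ^ 2 ∂μ)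
      = (2 / ρ) * ∫ x, ‖gradient f x‖ ^ 2 ∂μ := by
  have hmgf := mgf_sum_gibbs ρ hρ W U hU D hD dens hdens hint Z hZ hZpos μ hμ
  set s : EuclideanSpace ℝ (Fin n) → ℝ := fun x => ∑ i, x i with hs
  -- A nonzero Bochner integral certifies integrability, so every exponential moment is finite.
  have hexp : ∀ τ : ℝ, Integrable (fun x => Real.exp (τ * s x)) μ := fun τ =>
    Integrable.of_integral_ne_zero (by
      have h := hmgf τ
      rw [ProbabilityTheory.mgf] at h
      rw [h]
      exact (Real.exp_pos _).ne')
  have huniv : ProbabilityTheory.integrableExpSet s μ = univ := eq_univ_of_forall hexp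
  have hmem : 2 * lam ∈ interior (ProbabilityTheory.integrableExpSet s μ) := by
    rw [huniv, interior_univ]
    trivial
  set A : ℝ := Real.exp (n * (2 * lam) ^ 2 / (2 * ρ)) with hA
  have h0 : ∫ x, Real.exp (2 * lam * s x) ∂μ = A := hmgf (2 * lam)
  have hs_int : Integrable (fun x => s x * Real.exp (2 * lam * s x)) μ := by
    simpa using ProbabilityTheory.integrable_pow_mul_exp_of_mem_interior_integrableExpSet hmem 1
  have h1 : ∫ x, s x * Real.exp (2 * lam * s x) ∂μ = 2 * n * lam / ρ * A := by
    have hd := ProbabilityTheory.hasDerivAt_mgf hmem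
    rw [funext hmgf] at hd
    have hd' := ((((hasDerivAt_id (2 * lam)).pow 2).const_mul (n : ℝ)).div_const (2 * ρ)).exp
    refine hd.unique (hd'.congr_deriv ?_)
    simp only [id, Pi.pow_apply, hA]
    field_simp
    push_cast
    ring
  have hf2 : ∀ x, f x ^ 2 = Real.exp (2 * c) * Real.exp (2 * lam * s x) := fun x => by
    rw [hf, ← Real.exp_nat_mul, ← Real.exp_add]
    congr 1
    push_cast
    ring
  have hlog : ∀ x, Real.log (f x ^ 2) = 2 * c + 2 * lam * s x := fun x => by
    rw [hf2, ← Real.exp_add, Real.log_exp]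
  have hI : ∫ x, f x ^ 2 ∂μ = Real.exp (2 * c) * A := by
    simp_rw [hf2]
    rw [integral_const_mul, h0]
  have hE : ∫ x, f x ^ 2 * Real.log (f x ^ 2) ∂μ
      = Real.exp (2 * c) * (2 * c * A + 2 * lam * (2 * n * lam / ρ * A)) := by
    have : ∀ x, f x ^ 2 * Real.log (f x ^ 2) = Real.exp (2 * c) *
        (2 * c * Real.exp (2 * lam * s x) + 2 * lam * (s x * Real.exp (2 * lam * s x))) := by
      intro x
      rw [hlog, hf2]
      ring
    simp_rw [this]
    rw [integral_const_mul, integral_add ((hexp _).const_mul _) (hs_int.const_mul _),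
      integral_const_mul, integral_const_mul, h0, h1]
  have hG : ∫ x, ‖gradient f x‖ ^ 2 ∂μ = n * lam ^ 2 * (Real.exp (2 * c) * A) := by
    have : ∀ x, ‖gradient f x‖ ^ 2 = n * lam ^ 2 * f x ^ 2 := fun x => by
      rw [funext hf, norm_gradient_exp_sum_sq]
    simp_rw [this]
    rw [integral_const_mul, hI]
  rw [hE, hI, hG, hA, ← Real.exp_add, Real.log_exp, Real.exp_add]
  field_simp
  ring
end

section
/- Let μ be the probability measure on ℝⁿ with density proportional to exp(−V(x) − Σ_{i<j} W(x_i − x_j)), where V : ℝⁿ → ℝ is ρ-convex for some ρ > 0 and W : ℝ → ℝ ∪ {+∞} is convex with domain (0,∞), and assume the normalizing constant is finite. Then for every Lipschitz function F : ℝⁿ → ℝ and every r > 0, μ(|F − ∫F dμ| ≥ r) ≤ 2 exp(−ρ r² / (2 ‖F‖_Lip²)). -/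
open MeasureTheory Real Set
open scoped ENNReal BigOperators NNReal

/-!
The potential `U` is `ρ`-convex on the convex open chamber `D`, so `μ` is a strongly log-concave
probability measure; concentration is derived from the Prékopa–Leindler inequality alone,
without a logarithmic Sobolev inequality (hence without any smoothness).

For `t + s = 1` with `t, s > 0` and real `l`, `ρ`-convexity and the Lipschitz bound give, after
completing the square in `‖x - y‖`,
`t (l F x - U x) + s (-(t l / s) F y - U y) ≤ -U (t x + s y) + t l² K² / (2 ρ s)`,
so Prékopa–Leindler yields
`(∫ exp (l F) dμ) ^ t * (∫ exp (-(t l / s) F) dμ) ^ s ≤ exp (t l² K² / (2 ρ s))`.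
With `t = s = 1/2` this shows that every exponential moment of `F` is finite. If `F` is centred,
the second integral is at least `1` by Jensen, so `∫ exp (l F) dμ ≤ exp (l² K² / (2 ρ s))`.
The symmetric choice `s = 1/2` would lose a factor `2`; letting `s → 1` gives the sharp
sub-Gaussian constant `K² / ρ`, and the Chernoff bound for `F` and `-F` concludes.

Prékopa–Leindler is obtained on the line from the one-dimensional Brunn–Minkowski
inequality applied to superlevel sets, and in dimension `n` by induction with Tonelli's theorem.
-/

/-! ### The Brunn–Minkowski inequality on the line -/

/-- The translates `A + min B` and `max A + B` both lie in `A + B` and meet in at most one point. -/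
lemma volume_add_le_of_isCompact {A B C : Set ℝ} (hA : IsCompact A) (hB : IsCompact B)
    (hA0 : A.Nonempty) (hB0 : B.Nonempty) (hC : ∀ x ∈ A, ∀ y ∈ B, x + y ∈ C) :
    volume A + volume B ≤ volume C := by
  obtain ⟨a, haA, ha⟩ := hA.exists_isGreatest hA0
  obtain ⟨b, hbB, hb⟩ := hB.exists_isLeast hB0
  have h1 : volume ((fun x => -b + x) ⁻¹' A) = volume A := measure_preimage_add _ _ _
  have h2 : volume ((fun x => -a + x) ⁻¹' B) = volume B := measure_preimage_add _ _ _
  have hdisj : AEDisjoint volume ((fun x => -b + x) ⁻¹' A) ((fun x => -a + x) ⁻¹' B) := by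
    refine measure_mono_null (t := {a + b}) ?_ (by simp)
    rintro x ⟨hx1, hx2⟩
    have := ha hx1
    have := hb hx2
    simp only [mem_singleton_iff]
    linarith
  rw [← h1, ← h2, ← measure_union₀ ((hB.measurableSet.preimage (by fun_prop)).nullMeasurableSet)
    hdisj]
  refine measure_mono ?_
  rintro x (hx | hx)
  · simpa using hC _ hx b hbB
  · simpa using hC a haA _ hx

open scoped Pointwise in
/-- Brunn–Minkowski on the line for measurable sets; the compact case passes to the limit by
inner regularity, which avoids the possible non-measurability of `t • A + s • B`. -/
lemma volume_add_le {A B C : Set ℝ} (hA : MeasurableSet A) (hB : MeasurableSet B)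
    (hA0 : A.Nonempty) (hB0 : B.Nonempty) {t s : ℝ} (ht : 0 < t) (hs : 0 < s)
    (hC : ∀ x ∈ A, ∀ y ∈ B, t * x + s * y ∈ C) :
    ENNReal.ofReal t * volume A + ENNReal.ofReal s * volume B ≤ volume C := by
  obtain ⟨a, ha⟩ := hA0
  obtain ⟨b, hb⟩ := hB0
  have key : ∀ K, K ⊆ A → IsCompact K → ∀ L, L ⊆ B → IsCompact L →
      ENNReal.ofReal t * volume K + ENNReal.ofReal s * volume L ≤ volume C := by
    intro K hKA hK L hLB hL
    -- a point is added to `K` and `L` because either may be empty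
    have h := volume_add_le_of_isCompact (A := t • insert a K) (B := s • insert b L) (C := C)
      ((hK.insert a).smul t) ((hL.insert b).smul s)
      ((insert_nonempty a K).smul_set) ((insert_nonempty b L).smul_set) ?_
    · simp only [Measure.addHaar_smul, Module.finrank_self, pow_one, abs_of_pos ht,
        abs_of_pos hs] at h
      refine le_trans ?_ h
      gcongr <;> exact subset_insert _ _
    · rintro _ ⟨x, hx, rfl⟩ _ ⟨y, hy, rfl⟩
      exact hC x (insert_subset ha hKA hx) y (insert_subset hb hLB hy)
  rw [hA.measure_eq_iSup_isCompact, hB.measure_eq_iSup_isCompact]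
  simp only [ENNReal.mul_iSup, iSup_and']
  exact ENNReal.biSup_add_biSup_le' (p := fun K => K ⊆ A ∧ IsCompact K)
    (q := fun L => L ⊆ B ∧ IsCompact L) ⟨∅, by simp⟩ ⟨∅, by simp⟩
    fun K hK L hL => key K hK.1 hK.2 L hL.1 hL.2

/-! ### The Prékopa–Leindler inequality -/

/-- The arithmetic form of Prékopa–Leindler on the line, for functions whose supremum is `1`.
Normalising the suprema makes the superlevel sets of `f` and `g` at a height `c` simultaneously
nonempty or empty, so that Brunn–Minkowski applies at every height. -/
lemma lintegral_add_le_of_sup_eq_one {f g h : ℝ → ℝ} (hf : Measurable f) (hg : Measurable g)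
    (hh : Measurable h) (hf0 : 0 ≤ f) (hg0 : 0 ≤ g) (hh0 : 0 ≤ h)
    (hf1 : ∀ x, f x ≤ 1) (hg1 : ∀ x, g x ≤ 1)
    (hfs : ∀ c, 0 < c → c < 1 → ∃ x, c < f x) (hgs : ∀ c, 0 < c → c < 1 → ∃ x, c < g x)
    {t s : ℝ} (ht : 0 < t) (hs : 0 < s)
    (H : ∀ c, 0 < c → ∀ x y, c < f x → c < g y → c < h (t * x + s * y)) :
    ENNReal.ofReal t * (∫⁻ x, ENNReal.ofReal (f x))
      + ENNReal.ofReal s * (∫⁻ x, ENNReal.ofReal (g x))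
      ≤ ∫⁻ x, ENNReal.ofReal (h x) := by
  have hmeas : ∀ k : ℝ → ℝ, Measurable fun c : ℝ => volume {x | c < k x} := fun k =>
    Antitone.measurable fun c d hcd => measure_mono fun x hx => lt_of_le_of_lt hcd hx
  rw [lintegral_eq_lintegral_meas_lt _ (ae_of_all _ hf0) hf.aemeasurable,
    lintegral_eq_lintegral_meas_lt _ (ae_of_all _ hg0) hg.aemeasurable,
    lintegral_eq_lintegral_meas_lt _ (ae_of_all _ hh0) hh.aemeasurable,
    ← lintegral_const_mul _ (hmeas f), ← lintegral_const_mul _ (hmeas g),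
    ← lintegral_add_left ((hmeas f).const_mul _)]
  refine setLIntegral_mono (hmeas h) fun c hc => ?_
  rcases lt_or_ge c 1 with hc1 | hc1
  · exact volume_add_le (measurableSet_lt measurable_const hf)
      (measurableSet_lt measurable_const hg) (hfs c hc hc1) (hgs c hc hc1) ht hs
      fun x hx y hy => H c hc x y hx hy
  · have e1 : {x | c < f x} = ∅ := by
      ext x; simpa using (hf1 x).trans hc1
    have e2 : {x | c < g x} = ∅ := by
      ext x; simpa using (hg1 x).trans hc1
    simp [e1, e2]


lemma geom_le_arith (x y : ℝ≥0∞) {t s : ℝ} (ht : 0 < t) (hs : 0 < s) (hts : t + s = 1) :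
    x ^ t * y ^ s ≤ ENNReal.ofReal t * x + ENNReal.ofReal s * y := by
  have hpq : (t⁻¹).HolderConjugate s⁻¹ :=
    Real.holderConjugate_iff.2 ⟨(one_lt_inv₀ ht).2 (by linarith), by simpa using hts⟩
  have h := ENNReal.young_inequality (x ^ t) (y ^ s) hpq
  rw [← ENNReal.rpow_mul, ← ENNReal.rpow_mul, mul_inv_cancel₀ ht.ne', mul_inv_cancel₀ hs.ne',
    ENNReal.rpow_one, ENNReal.rpow_one, ENNReal.ofReal_inv_of_pos ht,
    ENNReal.ofReal_inv_of_pos hs, div_eq_mul_inv, div_eq_mul_inv, inv_inv, inv_inv] at h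
  rwa [mul_comm x, mul_comm y] at h

lemma prekopaLeindler_real_of_iSup_ne_top {f g h : ℝ → ℝ≥0∞} (hf : Measurable f)
    (hg : Measurable g) (hh : Measurable h) (hfM : ⨆ x, f x ≠ ∞) (hgM : ⨆ x, g x ≠ ∞)
    {t s : ℝ} (ht : 0 < t) (hs : 0 < s) (hts : t + s = 1)
    (H : ∀ x y, f x ^ t * g y ^ s ≤ h (t * x + s * y)) :
    (∫⁻ x, f x) ^ t * (∫⁻ x, g x) ^ s ≤ ∫⁻ x, h x := by
  set a := ⨆ x, f x with ha
  set b := ⨆ x, g x with hb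
  have hfa : ∀ x, f x ≤ a := le_iSup f
  have hgb : ∀ x, g x ≤ b := le_iSup g
  rcases eq_or_ne a 0 with ha0 | ha0
  · have : ∀ x, f x = 0 := fun x => le_antisymm (ha0 ▸ hfa x) bot_le
    simp [this, ht]
  rcases eq_or_ne b 0 with hb0 | hb0
  · have : ∀ x, g x = 0 := fun x => le_antisymm (hb0 ▸ hgb x) bot_le
    simp [this, hs]
  set m := a ^ t * b ^ s with hm
  have hm0 : m ≠ 0 := mul_ne_zero (by simp [ha0, hfM]) (by simp [hb0, hgM])
  have hmt : m ≠ ∞ := ENNReal.mul_ne_top (by simp [hfM, ht.le]) (by simp [hgM, hs.le])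
  have hf1 : ∀ x, f x / a ≤ 1 := fun x => ENNReal.div_le_of_le_mul (by simpa using hfa x)
  have hg1 : ∀ x, g x / b ≤ 1 := fun x => ENNReal.div_le_of_le_mul (by simpa using hgb x)
  have hft : ∀ x, f x / a ≠ ∞ := fun x => ((hf1 x).trans_lt ENNReal.one_lt_top).ne
  have hgt : ∀ x, g x / b ≠ ∞ := fun x => ((hg1 x).trans_lt ENNReal.one_lt_top).ne
  have hht : ∀ x, min (h x / m) 1 ≠ ∞ := fun x => ((min_le_right _ _).trans_lt ENNReal.one_lt_top).ne
  have hsup : ∀ (k : ℝ → ℝ≥0∞) (e : ℝ≥0∞), e = ⨆ x, k x → e ≠ 0 → e ≠ ∞ → (∀ x, k x / e ≠ ∞) →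
      ∀ c, 0 < c → c < 1 → ∃ x, c < (k x / e).toReal := by
    intro k e he he0 het hk c hc0 hc
    have h1 : ENNReal.ofReal c * e < ⨆ x, k x := by
      rw [← he]
      calc ENNReal.ofReal c * e < 1 * e := by
            rw [ENNReal.mul_lt_mul_iff_left he0 het]
            exact ENNReal.ofReal_lt_one.2 hc
        _ = e := one_mul e
    obtain ⟨x, hx⟩ := lt_iSup_iff.1 h1
    exact ⟨x, (ENNReal.ofReal_lt_iff_lt_toReal hc0.le (hk x)).1
      ((ENNReal.lt_div_iff_mul_lt (.inl he0) (.inl het)).2 hx)⟩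
  have key := lintegral_add_le_of_sup_eq_one (f := fun x => (f x / a).toReal)
    (g := fun x => (g x / b).toReal) (h := fun x => (min (h x / m) 1).toReal)
    (by fun_prop) (by fun_prop) (by fun_prop)
    (fun x => ENNReal.toReal_nonneg) (fun x => ENNReal.toReal_nonneg)
    (fun x => ENNReal.toReal_nonneg)
    (fun x => ENNReal.toReal_le_of_le_ofReal zero_le_one (by simpa using hf1 x))
    (fun x => ENNReal.toReal_le_of_le_ofReal zero_le_one (by simpa using hg1 x))
    (hsup f a ha ha0 hfM hft) (hsup g b hb hb0 hgM hgt) ht hs ?_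
  · simp only [ENNReal.ofReal_toReal (hft _), ENNReal.ofReal_toReal (hgt _),
      ENNReal.ofReal_toReal (hht _)] at key
    have e1 : ∫⁻ x, f x = a * ∫⁻ x, f x / a := by
      rw [← lintegral_const_mul _ (by fun_prop)]
      simp [ENNReal.mul_div_cancel ha0 hfM]
    have e2 : ∫⁻ x, g x = b * ∫⁻ x, g x / b := by
      rw [← lintegral_const_mul _ (by fun_prop)]
      simp [ENNReal.mul_div_cancel hb0 hgM]
    calc (∫⁻ x, f x) ^ t * (∫⁻ x, g x) ^ s
        = m * ((∫⁻ x, f x / a) ^ t * (∫⁻ x, g x / b) ^ s) := by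
          rw [e1, e2, ENNReal.mul_rpow_of_nonneg _ _ ht.le, ENNReal.mul_rpow_of_nonneg _ _ hs.le]
          ring
      _ ≤ m * ∫⁻ x, min (h x / m) 1 := by
          gcongr
          exact (geom_le_arith _ _ ht hs hts).trans key
      _ ≤ m * ∫⁻ x, h x / m := by
          gcongr
          exact min_le_left _ _
      _ = ∫⁻ x, h x := by
          rw [← lintegral_const_mul _ (by fun_prop)]
          simp [ENNReal.mul_div_cancel hm0 hmt]
  · intro c hc x y hx hy
    rw [← ENNReal.ofReal_lt_iff_lt_toReal hc.le (hft x)] at hx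
    rw [← ENNReal.ofReal_lt_iff_lt_toReal hc.le (hgt y)] at hy
    rw [← ENNReal.ofReal_lt_iff_lt_toReal hc.le (hht _)]
    refine lt_min ?_ (hx.trans_le (hf1 x))
    have hc0 : ENNReal.ofReal c ≠ 0 := by simpa using hc
    calc ENNReal.ofReal c = ENNReal.ofReal c ^ t * ENNReal.ofReal c ^ s := by
          rw [← ENNReal.rpow_add _ _ hc0 ENNReal.ofReal_ne_top, hts, ENNReal.rpow_one]
      _ < (f x / a) ^ t * (g y / b) ^ s := 
          ENNReal.mul_lt_mul (ENNReal.rpow_lt_rpow hx ht) (ENNReal.rpow_lt_rpow hy hs)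
      _ = f x ^ t * g y ^ s / m := by
          rw [ENNReal.div_rpow_of_nonneg _ _ ht.le, ENNReal.div_rpow_of_nonneg _ _ hs.le, hm]
          rw [ENNReal.mul_div_mul_comm] <;> simp [ha0, hb0, hfM, hgM]
      _ ≤ h (t * x + s * y) / m := by
          gcongr
          exact H x y

/-- The Prékopa–Leindler inequality on the line; the functions are truncated at height `N`. -/
lemma prekopaLeindler_real {f g h : ℝ → ℝ≥0∞} (hf : Measurable f)
    (hg : Measurable g) (hh : Measurable h)
    {t s : ℝ} (ht : 0 < t) (hs : 0 < s) (hts : t + s = 1)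
    (H : ∀ x y, f x ^ t * g y ^ s ≤ h (t * x + s * y)) :
    (∫⁻ x, f x) ^ t * (∫⁻ x, g x) ^ s ≤ ∫⁻ x, h x := by
  have trunc : ∀ k : ℝ → ℝ≥0∞, Measurable k →
      Filter.Tendsto (fun N : ℕ => ∫⁻ x, min (k x) N) Filter.atTop (nhds (∫⁻ x, k x)) := by
    intro k hk
    refine lintegral_tendsto_of_tendsto_of_monotone (fun N => by fun_prop)
      (ae_of_all _ fun x N N' hN => min_le_min le_rfl (by exact_mod_cast hN))
      (ae_of_all _ fun x => ?_)
    simpa using (tendsto_const_nhds (x := k x)).min ENNReal.tendsto_nat_nhds_top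
  have bdd : ∀ N : ℕ, (∫⁻ x, min (f x) N) ^ t * (∫⁻ x, min (g x) N) ^ s ≤ ∫⁻ x, h x := by
    intro N
    refine prekopaLeindler_real_of_iSup_ne_top (by fun_prop) (by fun_prop) hh ?_ ?_ ht hs hts ?_
    · exact ((iSup_le fun x => min_le_right _ _).trans_lt (ENNReal.natCast_lt_top N)).ne
    · exact ((iSup_le fun x => min_le_right _ _).trans_lt (ENNReal.natCast_lt_top N)).ne
    · intro x y
      refine le_trans ?_ (H x y)
      gcongr <;> exact min_le_left _ _
  have mono : ∀ k : ℝ → ℝ≥0∞, Monotone fun N : ℕ => ∫⁻ x, min (k x) N := fun k N N' hN =>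
    lintegral_mono fun x => min_le_min le_rfl (by exact_mod_cast hN)
  have sup : ∀ k : ℝ → ℝ≥0∞, Measurable k → ∀ e : ℝ, 0 < e →
      (∫⁻ x, k x) ^ e = ⨆ N : ℕ, (∫⁻ x, min (k x) N) ^ e := by
    intro k hk e he
    exact tendsto_nhds_unique (((ENNReal.continuous_rpow_const).tendsto _).comp (trunc k hk))
      (tendsto_atTop_iSup fun N N' hN => ENNReal.rpow_le_rpow (mono k hN) he.le)
  rw [sup f hf t ht, sup g hg s hs]
  simp only [ENNReal.iSup_mul, ENNReal.mul_iSup]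
  refine iSup_le fun i => iSup_le fun j => ?_
  refine le_trans ?_ (bdd (max i j))
  gcongr
  · exact le_max_right i j
  · exact le_max_left i j

lemma prekopaLeindler_pi {t s : ℝ} (ht : 0 < t) (hs : 0 < s) (hts : t + s = 1) (n : ℕ) :
    ∀ {f g h : (Fin n → ℝ) → ℝ≥0∞}, Measurable f → Measurable g → Measurable h →
    (∀ x y, f x ^ t * g y ^ s ≤ h (t • x + s • y)) →
    (∫⁻ x, f x) ^ t * (∫⁻ x, g x) ^ s ≤ ∫⁻ x, h x := by
  induction n with
  | zero =>
    intro f g h _ _ _ H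
    simpa [volume_pi, Measure.pi_of_empty _ (0 : Fin 0 → ℝ)] using H 0 0
  | succ n ih =>
    intro f g h hf hg hh H
    let e := (MeasurableEquiv.piFinSuccAbove (fun _ : Fin (n + 1) => ℝ) 0).symm
    have he : MeasurePreserving e := (volume_preserving_piFinSuccAbove (fun _ => ℝ) 0).symm
    have fub : ∀ k : (Fin (n + 1) → ℝ) → ℝ≥0∞, Measurable k →
        ∫⁻ x, k x = ∫⁻ u : ℝ, ∫⁻ v : Fin n → ℝ, k (e (u, v)) := by
      intro k hk
      rw [← he.lintegral_comp hk, Measure.volume_eq_prod, lintegral_prod _ (by fun_prop)]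
    have meas : ∀ k : (Fin (n + 1) → ℝ) → ℝ≥0∞, Measurable k →
        Measurable fun u : ℝ => ∫⁻ v : Fin n → ℝ, k (e (u, v)) := fun k hk =>
      Measurable.lintegral_prod_right' (f := fun p => k (e p)) (by fun_prop)
    rw [fub f hf, fub g hg, fub h hh]
    -- the one-dimensional inequality applies to the marginals, by the inequality on the slices
    refine prekopaLeindler_real (meas f hf) (meas g hg) (meas h hh) ht hs hts fun x y => ?_
    refine ih (by fun_prop) (by fun_prop) (by fun_prop) fun v w => ?_
    convert H (e (x, v)) (e (y, w)) using 2
    ext i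
    refine Fin.cases ?_ (fun i => ?_) i <;> simp [e, MeasurableEquiv.piFinSuccAbove]

/-- The Prékopa–Leindler inequality on Euclidean space. -/
lemma prekopaLeindler {n : ℕ} {f g h : EuclideanSpace ℝ (Fin n) → ℝ≥0∞}
    (hf : Measurable f) (hg : Measurable g) (hh : Measurable h)
    {t s : ℝ} (ht : 0 < t) (hs : 0 < s) (hts : t + s = 1)
    (H : ∀ x y, f x ^ t * g y ^ s ≤ h (t • x + s • y)) :
    (∫⁻ x, f x) ^ t * (∫⁻ x, g x) ^ s ≤ ∫⁻ x, h x := by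
  have hm := PiLp.volume_preserving_toLp (Fin n)
  rw [← hm.lintegral_comp hf, ← hm.lintegral_comp hg, ← hm.lintegral_comp hh]
  refine prekopaLeindler_pi ht hs hts n (by fun_prop) (by fun_prop) (by fun_prop) fun x y => ?_
  simpa using H (WithLp.toLp 2 x) (WithLp.toLp 2 y)

/-! ### Strongly log-concave measures -/

open ProbabilityTheory

/-- `μ` has Lebesgue density `exp (-φ)` on the convex set `D` and `0` off `D`, where `φ` is
`ρ`-convex on `D`. This encodes a `ρ`-convex potential that is `+∞` off `D`; the values of the
real-valued `φ` outside `D` play no role. -/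
structure IsStronglyLogConcave {n : ℕ} (ρ : ℝ) (μ : Measure (EuclideanSpace ℝ (Fin n)))
    (D : Set (EuclideanSpace ℝ (Fin n))) (φ : EuclideanSpace ℝ (Fin n) → ℝ) : Prop where
  measurable : Measurable (D.indicator fun x => ENNReal.ofReal (exp (-φ x)))
  eq_withDensity : μ = volume.withDensity (D.indicator fun x => ENNReal.ofReal (exp (-φ x)))
  mem : ∀ x ∈ D, ∀ y ∈ D, ∀ t s : ℝ, 0 < t → 0 < s → t + s = 1 → t • x + s • y ∈ D
  le : ∀ x ∈ D, ∀ y ∈ D, ∀ t s : ℝ, 0 < t → 0 < s → t + s = 1 →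
    φ (t • x + s • y) ≤ t * φ x + s * φ y - ρ / 2 * (t * s) * ‖x - y‖ ^ 2

section
variable {n : ℕ} {ρ : ℝ} {μ : Measure (EuclideanSpace ℝ (Fin n))}
  {D : Set (EuclideanSpace ℝ (Fin n))} {φ F : EuclideanSpace ℝ (Fin n) → ℝ} {K : ℝ≥0}

/-- The weighted product of exponential moments bounded through Prékopa–Leindler. The integrals
are `ℝ≥0∞`-valued, so no integrability of the exponentials is presupposed. -/
lemma IsStronglyLogConcave.lintegral_mul_le (hμ : IsStronglyLogConcave ρ μ D φ)
    [IsProbabilityMeasure μ] (hρ : 0 < ρ) (hF : LipschitzWith K F) {t s : ℝ}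
    (ht : 0 < t) (hs : 0 < s) (hts : t + s = 1) (l : ℝ) :
    (∫⁻ x, ENNReal.ofReal (exp (l * F x)) ∂μ) ^ t *
      (∫⁻ x, ENNReal.ofReal (exp (-(t * l / s) * F x)) ∂μ) ^ s
      ≤ ENNReal.ofReal (exp (t * (l ^ 2 * K ^ 2 / (2 * ρ * s)))) := by
  set P := D.indicator fun x => ENNReal.ofReal (exp (-φ x)) with hP
  have hPm : Measurable P := hμ.measurable
  have hFm : Measurable F := hF.continuous.measurable
  have hint : ∀ k : EuclideanSpace ℝ (Fin n) → ℝ≥0∞, Measurable k →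
      ∫⁻ x, k x ∂μ = ∫⁻ x, P x * k x := fun k hk => by
    rw [hμ.eq_withDensity, lintegral_withDensity_eq_lintegral_mul _ hPm hk]
    rfl
  have h1 : ∫⁻ x, P x * ENNReal.ofReal (exp (t * (l ^ 2 * K ^ 2 / (2 * ρ * s)))) =
      ENNReal.ofReal (exp (t * (l ^ 2 * K ^ 2 / (2 * ρ * s)))) := by
    rw [← hint _ measurable_const]
    simp
  rw [hint _ (by fun_prop), hint _ (by fun_prop), ← h1]
  refine prekopaLeindler (by fun_prop) (by fun_prop) (by fun_prop) ht hs hts fun x y => ?_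
  by_cases hx : x ∈ D
  swap
  · simp [hP, hx, ht]
  by_cases hy : y ∈ D
  swap
  · simp [hP, hy, hs]
  have hz := hμ.mem x hx y hy t s ht hs hts
  have hle := hμ.le x hx y hy t s ht hs hts
  simp only [hP, indicator_of_mem hx, indicator_of_mem hy, indicator_of_mem hz]
  simp only [← ENNReal.ofReal_mul (exp_pos _).le, ← exp_add,
    ENNReal.ofReal_rpow_of_pos (exp_pos _), ← exp_mul]
  refine ENNReal.ofReal_le_ofReal (exp_le_exp.2 ?_)
  have hlip : l * (F x - F y) ≤ |l| * (K * ‖x - y‖) := by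
    refine (le_abs_self _).trans ?_
    rw [abs_mul]
    gcongr
    simpa [dist_eq_norm] using hF.dist_le_mul x y
  -- completing the square in `‖x - y‖`
  have hsq : |l| * (K * ‖x - y‖) ≤ l ^ 2 * K ^ 2 / (2 * ρ * s) + ρ / 2 * s * ‖x - y‖ ^ 2 := by
    have h0 : l ^ 2 * K ^ 2 / (2 * ρ * s) + ρ / 2 * s * ‖x - y‖ ^ 2 - |l| * (K * ‖x - y‖)
        = (|l| * K - ρ * s * ‖x - y‖) ^ 2 / (2 * ρ * s) := by
      rw [← sq_abs l]
      field_simp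
      ring
    have h2 : 0 ≤ (|l| * K - ρ * s * ‖x - y‖) ^ 2 / (2 * ρ * s) := by positivity
    linarith
  have hfin := mul_le_mul_of_nonneg_left (hlip.trans hsq) ht.le
  have e : -(t * l / s) * F y * s = -(t * l * F y) := by field_simp
  linarith

lemma IsStronglyLogConcave.integrable_exp_mul (hμ : IsStronglyLogConcave ρ μ D φ)
    [IsProbabilityMeasure μ] (hρ : 0 < ρ) (hF : LipschitzWith K F) (l : ℝ) :
    Integrable (fun x => exp (l * F x)) μ := by
  have hFm : Measurable F := hF.continuous.measurable
  have h := hμ.lintegral_mul_le hρ hF (t := 1 / 2) (s := 1 / 2) (by norm_num) (by norm_num)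
    (by norm_num) l
  have hpos : (∫⁻ x, ENNReal.ofReal (exp (-((1 / 2) * l / (1 / 2)) * F x)) ∂μ) ≠ 0 := by
    rw [Ne, lintegral_eq_zero_iff (by fun_prop)]
    intro h0
    obtain ⟨x, hx⟩ := h0.exists
    exact absurd hx (by simp [exp_pos])
  refine ⟨by fun_prop, ?_⟩
  rw [hasFiniteIntegral_iff_ofReal (ae_of_all _ fun x => (exp_pos _).le)]
  refine lt_top_iff_ne_top.2 fun htop => ?_
  rw [htop, ENNReal.top_rpow_of_pos (by norm_num),
    ENNReal.top_mul fun h0 => hpos ((ENNReal.rpow_eq_zero_iff_of_pos (by norm_num)).1 h0)] at h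
  simp at h

lemma IsStronglyLogConcave.integrable (hμ : IsStronglyLogConcave ρ μ D φ)
    [IsProbabilityMeasure μ] (hρ : 0 < ρ) (hF : LipschitzWith K F) : Integrable F μ := by
  refine ((hμ.integrable_exp_mul hρ hF 1).add (hμ.integrable_exp_mul hρ hF (-1))).mono'
    hF.continuous.aestronglyMeasurable (ae_of_all _ fun x => ?_)
  have h1 := add_one_le_exp (F x)
  have h2 := add_one_le_exp (-F x)
  have h3 := exp_pos (F x)
  have h4 := exp_pos (-F x)
  simp only [Pi.add_apply, one_mul, neg_mul, norm_eq_abs]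
  exact abs_le.2 ⟨by linarith, by linarith⟩

/-- A sub-Gaussian bound with constant `K² / (ρ s)`, which becomes sharp as `s → 1`. -/
lemma IsStronglyLogConcave.mgf_le_of_lt_one (hμ : IsStronglyLogConcave ρ μ D φ)
    [IsProbabilityMeasure μ] (hρ : 0 < ρ) (hF : LipschitzWith K F) (h0 : ∫ x, F x ∂μ = 0)
    {s : ℝ} (hs : 0 < s) (hs1 : s < 1) (l : ℝ) :
    mgf F μ l ≤ exp (l ^ 2 * K ^ 2 / (2 * ρ * s)) := by
  have ht : 0 < 1 - s := by linarith
  have h := hμ.lintegral_mul_le hρ hF ht hs (by ring) l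
  have conv : ∀ c, ∫⁻ x, ENNReal.ofReal (exp (c * F x)) ∂μ = ENNReal.ofReal (mgf F μ c) :=
    fun c => (ofReal_integral_eq_lintegral_ofReal (hμ.integrable_exp_mul hρ hF c)
      (ae_of_all _ fun x => (exp_pos _).le)).symm
  -- Jensen's inequality for `exp` at the mean `0`
  have jensen : ∀ c, 1 ≤ mgf F μ c := by
    intro c
    have := integral_mono (((hμ.integrable hρ hF).const_mul c).add (integrable_const (1 : ℝ)))
      (hμ.integrable_exp_mul hρ hF c) fun x => add_one_le_exp (c * F x)
    have e : ∫ x, ((fun x => c * F x) + fun _ => (1 : ℝ) : EuclideanSpace ℝ (Fin n) → ℝ) x ∂μ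
        = 1 := by
      rw [integral_add' ((hμ.integrable hρ hF).const_mul c) (integrable_const (1 : ℝ)),
        integral_const_mul, h0]
      simp
    exact e ▸ this
  rw [conv, conv] at h
  have h2 : ENNReal.ofReal (mgf F μ l) ^ (1 - s) ≤
      ENNReal.ofReal (exp (l ^ 2 * K ^ 2 / (2 * ρ * s))) ^ (1 - s) := by
    rw [ENNReal.ofReal_rpow_of_pos (exp_pos _), ← exp_mul, mul_comm _ (1 - s)]
    refine le_trans ?_ h
    refine le_mul_of_one_le_right' (ENNReal.one_le_rpow ?_ hs)
    simpa using ENNReal.ofReal_le_ofReal (jensen (-((1 - s) * l / s)))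
  exact (ENNReal.ofReal_le_ofReal_iff (exp_pos _).le).1 ((ENNReal.rpow_le_rpow_iff ht).1 h2)

lemma IsStronglyLogConcave.hasSubgaussianMGF (hμ : IsStronglyLogConcave ρ μ D φ)
    [IsProbabilityMeasure μ] (hρ : 0 < ρ) (hF : LipschitzWith K F) :
    HasSubgaussianMGF (fun x => F x - ∫ y, F y ∂μ) (K ^ 2 / ρ.toNNReal) μ := by
  have hG : LipschitzWith K fun x => F x - ∫ y, F y ∂μ := by
    simpa using hF.sub (LipschitzWith.const (∫ y, F y ∂μ))
  have hG0 : ∫ x, (F x - ∫ y, F y ∂μ) ∂μ = 0 := by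
    rw [integral_sub (hμ.integrable hρ hF) (integrable_const _)]
    simp
  refine ⟨fun l => hμ.integrable_exp_mul hρ hG l, fun l => ?_⟩
  have hlim : Filter.Tendsto (fun s : ℝ => exp (l ^ 2 * K ^ 2 / (2 * ρ * s)))
      (nhdsWithin 1 (Iio 1)) (nhds (exp (l ^ 2 * K ^ 2 / (2 * ρ * 1)))) := by
    refine Filter.Tendsto.mono_left (ContinuousAt.tendsto ?_) nhdsWithin_le_nhds
    have : 2 * ρ * 1 ≠ 0 := by positivity
    fun_prop (disch := assumption)
  have h := ge_of_tendsto hlim (b := mgf (fun x => F x - ∫ y, F y ∂μ) μ l) ?_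
  · refine h.trans_eq (congrArg exp ?_)
    simp only [NNReal.coe_div, NNReal.coe_pow, Real.coe_toNNReal _ hρ.le]
    field_simp
  · filter_upwards [Ioo_mem_nhdsLT (zero_lt_one' ℝ)] with s hs
    exact hμ.mgf_le_of_lt_one hρ hG hG0 hs.1 hs.2 l

lemma IsStronglyLogConcave.measure_abs_sub_integral_ge_le (hμ : IsStronglyLogConcave ρ μ D φ)
    [IsProbabilityMeasure μ] (hρ : 0 < ρ) (hF : LipschitzWith K F) {r : ℝ} (hr : 0 < r) :
    μ {x | r ≤ |F x - ∫ y, F y ∂μ|}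
      ≤ ENNReal.ofReal (2 * exp (-(ρ / (K : ℝ) ^ 2) * r ^ 2 / 2)) := by
  have h := hμ.hasSubgaussianMGF hρ hF
  have e : -r ^ 2 / (2 * ((K ^ 2 / ρ.toNNReal : ℝ≥0) : ℝ)) = -(ρ / (K : ℝ) ^ 2) * r ^ 2 / 2 := by
    simp only [NNReal.coe_div, NNReal.coe_pow, Real.coe_toNNReal _ hρ.le]
    field_simp
  have h1 := h.measure_ge_le hr.le
  have h2 := h.neg.measure_ge_le hr.le
  rw [e] at h1 h2
  rw [← ofReal_measureReal]
  refine ENNReal.ofReal_le_ofReal ?_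
  rw [two_mul]
  refine le_trans ?_ (add_le_add h1 h2)
  refine le_trans (measureReal_mono ?_) (measureReal_union_le _ _)
  intro x hx
  exact le_abs.1 (mem_ofPred_eq ▸ hx)

end

/-! ### The Boltzmann–Gibbs measure -/

lemma sum_sum_convex {n : ℕ} {W : ℝ → ℝ} (hW : ConvexOn ℝ (Ioi (0 : ℝ)) W)
    {x y : EuclideanSpace ℝ (Fin n)} (hx : ∀ i j : Fin n, i < j → x j < x i)
    (hy : ∀ i j : Fin n, i < j → y j < y i) {t s : ℝ} (ht : 0 < t) (hs : 0 < s)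
    (hts : t + s = 1) :
    (∑ i, ∑ j, if i < j then W ((t • x + s • y) i - (t • x + s • y) j) else 0) ≤
      t * (∑ i, ∑ j, if i < j then W (x i - x j) else 0) +
        s * (∑ i, ∑ j, if i < j then W (y i - y j) else 0) := by
  simp only [Finset.mul_sum, ← Finset.sum_add_distrib]
  refine Finset.sum_le_sum fun i _ => Finset.sum_le_sum fun j _ => ?_
  split_ifs with hij
  · have h := hW.2 (mem_Ioi.2 (sub_pos.2 (hx i j hij))) (mem_Ioi.2 (sub_pos.2 (hy i j hij)))
      ht.le hs.le hts
    simp only [smul_eq_mul] at h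
    convert h using 2
    simp only [PiLp.add_apply, PiLp.smul_apply, smul_eq_mul]
    ring
  · simp

lemma le_of_convexOn_sub_sq {n : ℕ} {ρ : ℝ} {V : EuclideanSpace ℝ (Fin n) → ℝ}
    (hV : ConvexOn ℝ univ (fun x => V x - ρ / 2 * ‖x‖ ^ 2)) (x y : EuclideanSpace ℝ (Fin n))
    {t s : ℝ} (ht : 0 < t) (hs : 0 < s) (hts : t + s = 1) :
    V (t • x + s • y) ≤ t * V x + s * V y - ρ / 2 * (t * s) * ‖x - y‖ ^ 2 := by
  have h := hV.2 (mem_univ x) (mem_univ y) ht.le hs.le hts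
  have e : ‖t • x + s • y‖ ^ 2 = t * ‖x‖ ^ 2 + s * ‖y‖ ^ 2 - t * s * ‖x - y‖ ^ 2 := by
    rw [norm_add_sq_real, norm_sub_sq_real, norm_smul, norm_smul, inner_smul_left,
      inner_smul_right, mul_pow, mul_pow, norm_eq_abs, norm_eq_abs, sq_abs, sq_abs]
    obtain rfl : s = 1 - t := by linarith
    simp
    ring
  simp only [smul_eq_mul, e] at h
  linarith

/-- **Gaussian concentration for Lipschitz functions**: for a Boltzmann–Gibbs measure
`μ` on `ℝⁿ` with `ρ`-convex confinement `V` and convex singular interaction `W`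
(domain `(0,∞)`), every `K`-Lipschitz function `F : ℝⁿ → ℝ` satisfies, for all `r > 0`,
`μ(|F - ∫F dμ| ≥ r) ≤ 2 exp(-ρ r² / (2K²))`. -/
theorem gaussian_concentration_lipschitz
    {n : ℕ} (ρ : ℝ) (hρ : 0 < ρ)
    (V : EuclideanSpace ℝ (Fin n) → ℝ) (W : ℝ → ℝ)
    (hV : ConvexOn ℝ Set.univ (fun x => V x - ρ / 2 * ‖x‖ ^ 2))
    (hW : ConvexOn ℝ (Set.Ioi (0 : ℝ)) W)
    (U : EuclideanSpace ℝ (Fin n) → ℝ)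
    (hU : ∀ x, U x = V x + ∑ i : Fin n, ∑ j : Fin n, if i < j then W (x i - x j) else 0)
    (D : Set (EuclideanSpace ℝ (Fin n)))
    (hD : D = {x | ∀ i j : Fin n, i < j → x j < x i})
    (dens : EuclideanSpace ℝ (Fin n) → ℝ)
    (hdens : dens = D.indicator fun x => Real.exp (-U x))
    (hint : Integrable dens volume)
    (Z : ℝ) (hZ : Z = ∫ x, dens x) (hZpos : 0 < Z)
    (μ : Measure (EuclideanSpace ℝ (Fin n)))
    (hμ : μ = volume.withDensity fun x => ENNReal.ofReal (dens x / Z))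
    (F : EuclideanSpace ℝ (Fin n) → ℝ) (K : ℝ≥0) (hK : 0 < K)
    (hF : LipschitzWith K F)
    (r : ℝ) (hr : 0 < r) :
    μ {x | r ≤ |F x - ∫ y, F y ∂μ|}
      ≤ ENNReal.ofReal (2 * Real.exp (-(ρ / (K : ℝ) ^ 2) * r ^ 2 / 2)) := by
  have hDmem : ∀ x, x ∈ D ↔ ∀ i j : Fin n, i < j → x j < x i := fun x => by rw [hD]; rfl
  have hDopen : IsOpen D := by
    rw [hD]
    simp only [ofPred_forall]
    exact isOpen_iInter_of_finite fun i => isOpen_iInter_of_finite fun j =>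
      isOpen_iInter_of_finite fun _ => isOpen_lt (by fun_prop) (by fun_prop)
  have hVcont : Continuous V := by
    have h := (continuousOn_univ.1 (hV.continuousOn isOpen_univ)).add
      (by fun_prop : Continuous fun x : EuclideanSpace ℝ (Fin n) => ρ / 2 * ‖x‖ ^ 2)
    exact h.congr fun x => sub_add_cancel _ _
  have hUcont : ContinuousOn U D := by
    refine ContinuousOn.congr (f := fun x =>
      V x + ∑ i : Fin n, ∑ j : Fin n, if i < j then W (x i - x j) else 0) ?_ fun x _ => hU x
    refine hVcont.continuousOn.add (continuousOn_finsetSum _ fun i _ =>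
      continuousOn_finsetSum _ fun j _ => ?_)
    split_ifs with hij
    · exact (hW.continuousOn isOpen_Ioi).comp (by fun_prop)
        fun x hx => mem_Ioi.2 (sub_pos.2 ((hDmem x).1 hx i j hij))
    · exact continuousOn_const
  -- the normalising constant is absorbed into the potential
  have hP : (fun x => ENNReal.ofReal (dens x / Z)) =
      D.indicator fun x => ENNReal.ofReal (exp (-(U x + log Z))) := by
    ext x
    by_cases hx : x ∈ D
    · simp only [hdens, indicator_of_mem hx]
      rw [neg_add, exp_add, exp_neg (log Z), exp_log hZpos, div_eq_mul_inv]
    · simp [hdens, hx]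
  have hlc : IsStronglyLogConcave ρ μ D fun x => U x + log Z := by
    refine ⟨?_, by rw [hμ, hP], ?_, ?_⟩
    · classical
      rw [← piecewise_eq_indicator]
      refine ContinuousOn.measurable_piecewise ?_ continuous_zero.continuousOn
        hDopen.measurableSet
      exact ENNReal.continuous_ofReal.comp_continuousOn
        (continuous_exp.comp_continuousOn (hUcont.add continuousOn_const).neg)
    · intro x hx y hy t s ht hs hts
      rw [hDmem] at hx hy ⊢
      intro i j hij
      simp only [PiLp.add_apply, PiLp.smul_apply, smul_eq_mul]
      have := mul_lt_mul_of_pos_left (hx i j hij) ht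
      have := mul_lt_mul_of_pos_left (hy i j hij) hs
      linarith
    · intro x hx y hy t s ht hs hts
      have h1 := sum_sum_convex hW ((hDmem x).1 hx) ((hDmem y).1 hy) ht hs hts
      have h2 := le_of_convexOn_sub_sq hV x y ht hs hts
      have h3 : t * log Z + s * log Z = log Z := by rw [← add_mul, hts, one_mul]
      simp only [hU]
      linarith
  have hprob : IsProbabilityMeasure μ := by
    refine ⟨?_⟩
    have hnn : ∀ x, 0 ≤ dens x := fun x => by
      rw [hdens]
      exact indicator_nonneg (fun _ _ => (exp_pos _).le) x
    rw [hμ, withDensity_apply _ MeasurableSet.univ, Measure.restrict_univ,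
      ← ofReal_integral_eq_lintegral_ofReal (hint.div_const Z)
        (ae_of_all _ fun x => div_nonneg (hnn x) hZpos.le), integral_div, ← hZ,
      div_self hZpos.ne', ENNReal.ofReal_one]
  exact hlc.measure_abs_sub_integral_ge_le hρ hF hr
end

section
/- Let μ be the probability measure on ℝⁿ with density proportional to exp(−V(x) − Σ_{i<j} W(x_i − x_j)), where V : ℝⁿ → ℝ is ρ-convex for some ρ > 0 and W : ℝ → ℝ ∪ {+∞} is convex with domain (0,∞), and assume the normalizing constant is finite. Then for every r > 0, μ(|x₁ − ∫ x₁ μ(dx)| ≥ r) ≤ 2 exp(−ρ r²/2); since μ is supported in {x₁ ≥ … ≥ xₙ}, x₁ is the maximum coordinate, so this is a concentration inequality for the largest particle. -/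
/-!
The density `p` of `μ` is `ρ`-strongly log-concave: for `s + t = 1`,
`p x ^ s * p y ^ t * exp (ρ s t ‖x - y‖² / 2) ≤ p (s x + t y)`, because `V` is `ρ`-convex, `W` is
convex, and the open Weyl chamber is convex. The Prékopa–Leindler inequality (`pl_euc`), applied to
`p x * exp (a x₁)` and `p y * exp (-(s a / t) y₁)`, bounds
`(∫ exp (a x₁) dμ) ^ s * (∫ exp (-(s a / t) x₁) dμ) ^ t` by `exp (s a² / (2 ρ t))` (`mgf_product`).

This product bound first shows that all exponential moments are finite, so that `x₁` is integrable
with some mean `m`. Jensen's inequality bounds the second factor below by `exp (-s a m)`; taking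
the `s`-th root and letting `s → 0` gives `∫ exp (a (x₁ - m)) dμ ≤ exp (a² / (2 ρ))`, the
sub-Gaussian bound with the sharp constant (`hasSubgaussianMGF_coord`). The Chernoff bound for both
tails concludes.

Prékopa–Leindler is proved on the line from the one-dimensional Brunn–Minkowski inequality `bm_one`
and the layer-cake formula, then in dimension `n` by induction through Tonelli's theorem.
-/

open MeasureTheory Real Set
open scoped ENNReal BigOperators NNReal

/-! ### The Prékopa–Leindler inequality on the line -/

open scoped Pointwise in
/-- One-dimensional Brunn–Minkowski for compact sets: `s • A + t * min B` and
`s * max A + t • B` both lie in `s • A + t • B` and meet in at most one point. -/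
theorem bm_compact {A B C : Set ℝ} (hA : IsCompact A) (hB : IsCompact B) (hA0 : A.Nonempty)
    (hB0 : B.Nonempty) {s t : ℝ} (hs : 0 < s) (ht : 0 < t)
    (H : ∀ x ∈ A, ∀ y ∈ B, s * x + t * y ∈ C) :
    ENNReal.ofReal s * volume A + ENNReal.ofReal t * volume B ≤ volume C := by
  obtain ⟨a, haA, ha⟩ := hA.exists_isGreatest hA0
  obtain ⟨b, hbB, hb⟩ := hB.exists_isLeast hB0
  set A' : Set ℝ := (fun x => x + t * b) '' (s • A) with hA'
  set B' : Set ℝ := (fun x => x + s * a) '' (t • B) with hB'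
  have vA : volume A' = ENNReal.ofReal s * volume A := by
    rw [hA', image_add_right, measure_preimage_add_right, Measure.addHaar_smul_of_nonneg _ hs.le]
    simp
  have vB : volume B' = ENNReal.ofReal t * volume B := by
    rw [hB', image_add_right, measure_preimage_add_right, Measure.addHaar_smul_of_nonneg _ ht.le]
    simp
  have cB : IsCompact B' := (hB.smul t).image (continuous_add_const _)
  have hdis : AEDisjoint volume A' B' := by
    refine measure_mono_null (t := {s * a + t * b}) ?_ (by simp)
    rintro z ⟨⟨_, ⟨x, hx, rfl⟩, rfl⟩, ⟨_, ⟨y, hy, rfl⟩, hz⟩⟩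
    have h1 := mul_le_mul_of_nonneg_left (ha hx) hs.le
    have h2 := mul_le_mul_of_nonneg_left (hb hy) ht.le
    simp only [smul_eq_mul, mem_singleton_iff] at *
    linarith
  rw [← vA, ← vB, ← measure_union₀ cB.measurableSet.nullMeasurableSet hdis]
  refine measure_mono (union_subset ?_ ?_)
  · rintro _ ⟨_, ⟨x, hx, rfl⟩, rfl⟩
    exact H x hx b hbB
  · rintro _ ⟨_, ⟨y, hy, rfl⟩, rfl⟩
    have := H a haA y hy
    simp only [smul_eq_mul]
    rwa [add_comm]

/-- One-dimensional Brunn–Minkowski for nonempty measurable sets, by inner regularity. The set `C`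
containing the Minkowski combination need not be measurable, so the sum set itself never has to be. -/
theorem bm_one {A B C : Set ℝ} (hA : MeasurableSet A) (hB : MeasurableSet B) (hA0 : A.Nonempty)
    (hB0 : B.Nonempty) {s t : ℝ} (hs : 0 < s) (ht : 0 < t)
    (H : ∀ x ∈ A, ∀ y ∈ B, s * x + t * y ∈ C) :
    ENNReal.ofReal s * volume A + ENNReal.ofReal t * volume B ≤ volume C := by
  obtain ⟨a, ha⟩ := hA0
  obtain ⟨b, hb⟩ := hB0
  have sup : ∀ {A : Set ℝ}, MeasurableSet A →
      volume A = ⨆ K : {K : Set ℝ // K ⊆ A ∧ IsCompact K}, volume K.1 := by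
    intro A hA
    rw [hA.measure_eq_iSup_isCompact, iSup_subtype]
    simp only [iSup_and]
  have : Nonempty {K : Set ℝ // K ⊆ A ∧ IsCompact K} := ⟨∅, by simp⟩
  have : Nonempty {K : Set ℝ // K ⊆ B ∧ IsCompact K} := ⟨∅, by simp⟩
  rw [sup hA, sup hB, ENNReal.mul_iSup, ENNReal.mul_iSup]
  refine ENNReal.iSup_add_iSup_le fun K L => ?_
  -- Adding a point of the original sets keeps the compact approximations nonempty.
  calc _ ≤ ENNReal.ofReal s * volume (insert a K.1) + ENNReal.ofReal t * volume (insert b L.1) := by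
        gcongr <;> exact subset_insert _ _
    _ ≤ volume C := bm_compact (K.2.2.insert a) (L.2.2.insert b) (insert_nonempty _ _)
        (insert_nonempty _ _) hs ht fun x hx y hy =>
          H x (insert_subset ha K.2.1 hx) y (insert_subset hb L.2.1 hy)

theorem layer_le_one {f : ℝ → ℝ≥0∞} (hf : Measurable f) (h1 : ∀ x, f x ≤ 1) :
    ∫⁻ x, f x = ∫⁻ τ in Ioo (0 : ℝ) 1, volume {x | ENNReal.ofReal τ < f x} := by
  have hfin : ∀ x, f x ≠ ⊤ := fun x => ne_top_of_le_ne_top ENNReal.one_ne_top (h1 x)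
  have e1 : ∀ x, f x = ENNReal.ofReal (f x).toReal := fun x => (ENNReal.ofReal_toReal (hfin x)).symm
  have key := lintegral_eq_lintegral_meas_lt (volume : Measure ℝ) (f := fun x => (f x).toReal)
    (Filter.Eventually.of_forall fun x => ENNReal.toReal_nonneg) hf.ennreal_toReal.aemeasurable
  simp only [← e1] at key
  rw [key, ← Ioo_union_Ici_eq_Ioi zero_lt_one, lintegral_union measurableSet_Ici
    (by rw [Set.disjoint_left]; intro x hx hx'; exact absurd hx.2 (not_lt.2 hx'))]
  have z : ∫⁻ τ in Ici (1 : ℝ), volume {x | τ < (f x).toReal} = 0 := by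
    rw [setLIntegral_congr_fun (g := fun _ => 0) measurableSet_Ici, lintegral_zero]
    intro τ hτ
    have : {x | τ < (f x).toReal} = ∅ := by
      ext x
      have := ENNReal.toReal_mono ENNReal.one_ne_top (h1 x)
      simp only [mem_ofPred_eq, mem_empty_iff_false, iff_false, not_lt]
      exact this.trans (by simpa using hτ)
    simp [this]
  rw [z, add_zero]
  refine setLIntegral_congr_fun measurableSet_Ioo fun τ hτ => ?_
  congr 1
  ext x
  simp only [mem_ofPred_eq]
  exact (ENNReal.ofReal_lt_iff_lt_toReal hτ.1.le (hfin x)).symm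

/-- Prékopa–Leindler on the line for functions of supremum `1`: the superlevel sets at heights in
`(0, 1)` are then nonempty, so Brunn–Minkowski integrates over heights to the arithmetic-mean bound
`s ∫ f + t ∫ g ≤ ∫ h`, which is stronger than the geometric one. -/
theorem pl_norm {s t : ℝ} (hs : 0 < s) (ht : 0 < t) (hst : s + t = 1) {f g h : ℝ → ℝ≥0∞}
    (hf : Measurable f) (hg : Measurable g) (hh : Measurable h)
    (hf1 : ⨆ x, f x = 1) (hg1 : ⨆ x, g x = 1)
    (H : ∀ x y, f x ^ s * g y ^ t ≤ h (s * x + t * y)) :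
    (∫⁻ x, f x) ^ s * (∫⁻ x, g x) ^ t ≤ ∫⁻ x, h x := by
  have am : (∫⁻ x, f x) ^ s * (∫⁻ x, g x) ^ t
      ≤ ENNReal.ofReal s * (∫⁻ x, f x) + ENNReal.ofReal t * (∫⁻ x, g x) := by
    have hc : (s⁻¹).HolderConjugate t⁻¹ := by
      rw [Real.holderConjugate_iff]
      exact ⟨(one_lt_inv₀ hs).2 (by linarith), by simpa using hst⟩
    have := ENNReal.young_inequality ((∫⁻ x, f x) ^ s) ((∫⁻ x, g x) ^ t) hc
    rw [← ENNReal.rpow_mul, ← ENNReal.rpow_mul, mul_inv_cancel₀ hs.ne', mul_inv_cancel₀ ht.ne',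
      ENNReal.rpow_one, ENNReal.rpow_one, ENNReal.ofReal_inv_of_pos hs,
      ENNReal.ofReal_inv_of_pos ht, div_eq_mul_inv, div_eq_mul_inv, inv_inv, inv_inv] at this
    rwa [mul_comm (ENNReal.ofReal s), mul_comm (ENNReal.ofReal t)]
  refine am.trans ?_
  have hmin : Measurable fun x => min (h x) 1 := hh.min measurable_const
  refine le_trans ?_ (lintegral_mono (f := fun x => min (h x) 1) fun x => min_le_left _ _)
  rw [layer_le_one hf fun x => hf1 ▸ le_iSup f x, layer_le_one hg fun x => hg1 ▸ le_iSup g x,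
    layer_le_one hmin fun x => min_le_right _ _]
  have meas : ∀ f : ℝ → ℝ≥0∞, Measurable fun τ : ℝ => volume {x | ENNReal.ofReal τ < f x} := by
    intro f
    refine Antitone.measurable fun a b hab => measure_mono fun x hx => ?_
    exact (ENNReal.ofReal_le_ofReal hab).trans_lt hx
  rw [← lintegral_const_mul _ (meas f), ← lintegral_const_mul _ (meas g),
    ← lintegral_add_left ((meas f).const_mul _)]
  refine setLIntegral_mono (meas _) fun τ hτ => ?_
  have hτ1 : ENNReal.ofReal τ < 1 := by simpa using hτ.2
  refine bm_one (measurableSet_lt measurable_const hf) (measurableSet_lt measurable_const hg)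
    (lt_iSup_iff.1 (hf1.symm ▸ hτ1 : ENNReal.ofReal τ < ⨆ x, f x))
    (lt_iSup_iff.1 (hg1.symm ▸ hτ1 : ENNReal.ofReal τ < ⨆ x, g x)) hs ht fun x hx y hy => ?_
  refine lt_min (lt_of_lt_of_le ?_ (H x y)) hτ1
  have e : ENNReal.ofReal τ = ENNReal.ofReal τ ^ s * ENNReal.ofReal τ ^ t := by
    rw [← ENNReal.rpow_add_of_nonneg _ _ hs.le ht.le, hst, ENNReal.rpow_one]
  rw [e]
  exact ENNReal.mul_lt_mul (ENNReal.rpow_lt_rpow hx hs) (ENNReal.rpow_lt_rpow hy ht)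

/-- Prékopa–Leindler on the line for bounded functions, reduced to `pl_norm` by dividing `f`, `g`
and `h` by constants. -/
theorem pl_bdd {s t : ℝ} (hs : 0 < s) (ht : 0 < t) (hst : s + t = 1) {f g h : ℝ → ℝ≥0∞}
    (hf : Measurable f) (hg : Measurable g) (hh : Measurable h)
    (hf1 : ⨆ x, f x ≠ ⊤) (hg1 : ⨆ x, g x ≠ ⊤)
    (H : ∀ x y, f x ^ s * g y ^ t ≤ h (s * x + t * y)) :
    (∫⁻ x, f x) ^ s * (∫⁻ x, g x) ^ t ≤ ∫⁻ x, h x := by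
  by_cases ha : ⨆ x, f x = 0
  · have : ∀ x, f x = 0 := by simpa using ha
    simp [this, hs]
  by_cases hb : ⨆ x, g x = 0
  · have : ∀ x, g x = 0 := by simpa using hb
    simp [this, ht]
  set a := ⨆ x, f x
  set b := ⨆ x, g x
  have has0 : a ^ s ≠ 0 := by simp [ENNReal.rpow_eq_zero_iff, ha, hf1]
  have hasT : a ^ s ≠ ⊤ := ENNReal.rpow_ne_top_of_nonneg hs.le hf1
  have hbs0 : b ^ t ≠ 0 := by simp [ENNReal.rpow_eq_zero_iff, hb, hg1]
  have hbsT : b ^ t ≠ ⊤ := ENNReal.rpow_ne_top_of_nonneg ht.le hg1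
  have key := pl_norm hs ht hst (f := fun x => a⁻¹ * f x) (g := fun x => b⁻¹ * g x)
    (h := fun x => (a ^ s)⁻¹ * (b ^ t)⁻¹ * h x) (hf.const_mul _) (hg.const_mul _) (hh.const_mul _)
    (by rw [← ENNReal.mul_iSup]; exact ENNReal.inv_mul_cancel ha hf1)
    (by rw [← ENNReal.mul_iSup]; exact ENNReal.inv_mul_cancel hb hg1)
    (fun x y => by
      rw [ENNReal.mul_rpow_of_nonneg _ _ hs.le, ENNReal.mul_rpow_of_nonneg _ _ ht.le,
        ENNReal.inv_rpow, ENNReal.inv_rpow, mul_mul_mul_comm]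
      gcongr
      exact H x y)
  rw [lintegral_const_mul _ hf, lintegral_const_mul _ hg, lintegral_const_mul _ hh,
    ENNReal.mul_rpow_of_nonneg _ _ hs.le, ENNReal.mul_rpow_of_nonneg _ _ ht.le,
        ENNReal.inv_rpow, ENNReal.inv_rpow, mul_mul_mul_comm] at key
  refine (ENNReal.mul_le_mul_iff_right ?_ ?_).1 key
  · simp [hasT, hbsT]
  · exact ENNReal.mul_ne_top (by simpa using has0) (by simpa using hbs0)

/-- **Prékopa–Leindler inequality** on the line, obtained by truncating at height `N → ∞`. -/
theorem pl_one {s t : ℝ} (hs : 0 < s) (ht : 0 < t) (hst : s + t = 1) {f g h : ℝ → ℝ≥0∞}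
    (hf : Measurable f) (hg : Measurable g) (hh : Measurable h)
    (H : ∀ x y, f x ^ s * g y ^ t ≤ h (s * x + t * y)) :
    (∫⁻ x, f x) ^ s * (∫⁻ x, g x) ^ t ≤ ∫⁻ x, h x := by
  by_cases ha : ∫⁻ x, f x = 0
  · simp [ha, hs]
  by_cases hb : ∫⁻ x, g x = 0
  · simp [hb, ht]
  have lim : ∀ f : ℝ → ℝ≥0∞, Measurable f → Filter.Tendsto
      (fun N : ℕ => ∫⁻ x, min (f x) (N : ℝ≥0∞)) Filter.atTop (nhds (∫⁻ x, f x)) := by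
    intro f hf
    refine lintegral_tendsto_of_tendsto_of_monotone
      (fun N => (hf.min measurable_const).aemeasurable) ?_ ?_
    · refine Filter.Eventually.of_forall fun x M N hMN => ?_
      exact min_le_min_left _ (by exact_mod_cast hMN)
    · refine Filter.Eventually.of_forall fun x => ?_
      have := (tendsto_const_nhds (x := f x)).min ENNReal.tendsto_nat_nhds_top
      simpa using this
  have h0 : ∀ {c : ℝ≥0∞} {p : ℝ}, 0 < p → c ≠ 0 → c ^ p ≠ 0 := by
    intro c p hp hc
    simp [ENNReal.rpow_eq_zero_iff, hc, hp.le]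
  refine le_of_tendsto (ENNReal.Tendsto.mul
    ((ENNReal.continuous_rpow_const.tendsto _).comp (lim f hf)) (Or.inl (h0 hs ha))
    ((ENNReal.continuous_rpow_const.tendsto _).comp (lim g hg)) (Or.inl (h0 ht hb)))
    (Filter.Eventually.of_forall fun N => ?_)
  refine pl_bdd hs ht hst (hf.min measurable_const) (hg.min measurable_const) hh ?_ ?_ ?_
  · exact ne_top_of_le_ne_top (ENNReal.natCast_ne_top N) (iSup_le fun x => min_le_right _ _)
  · exact ne_top_of_le_ne_top (ENNReal.natCast_ne_top N) (iSup_le fun x => min_le_right _ _)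
  · intro x y
    refine le_trans ?_ (H x y)
    gcongr <;> exact min_le_left _ _

/-! ### The Prékopa–Leindler inequality in all dimensions -/

theorem lint_succ {n : ℕ} {f : (Fin (n + 1) → ℝ) → ℝ≥0∞} (hf : Measurable f) :
    ∫⁻ x, f x = ∫⁻ a : ℝ, ∫⁻ y : Fin n → ℝ, f (Fin.cons a y) := by
  have e := (volume_preserving_piFinSuccAbove (fun _ : Fin (n + 1) => ℝ) 0).symm
  rw [← e.lintegral_comp hf, Measure.volume_eq_prod]
  refine (lintegral_prod _ (hf.comp e.measurable).aemeasurable).trans ?_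
  simp [MeasurableEquiv.piFinSuccAbove, Fin.insertNthEquiv]

/-- **Prékopa–Leindler inequality** on `ℝⁿ`: by induction, the marginals in the first coordinate
satisfy the hypothesis of the one-dimensional inequality. -/
theorem pl_pi {s t : ℝ} (hs : 0 < s) (ht : 0 < t) (hst : s + t = 1) (n : ℕ)
    {f g h : (Fin n → ℝ) → ℝ≥0∞}
    (hf : Measurable f) (hg : Measurable g) (hh : Measurable h)
    (H : ∀ x y, f x ^ s * g y ^ t ≤ h (s • x + t • y)) :
    (∫⁻ x, f x) ^ s * (∫⁻ x, g x) ^ t ≤ ∫⁻ x, h x := by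
  induction n with
  | zero =>
    rw [volume_pi, Measure.pi_of_empty (x := 0), lintegral_dirac, lintegral_dirac, lintegral_dirac]
    simpa using H 0 0
  | succ n ih =>
    have mc : Measurable fun p : ℝ × (Fin n → ℝ) => (Fin.cons p.1 p.2 : Fin (n + 1) → ℝ) := by
      refine measurable_pi_iff.2 fun i => ?_
      refine Fin.cases ?_ (fun i => ?_) i
      · simpa using measurable_fst
      · simp only [Fin.cons_succ]; fun_prop
    have mc' : ∀ a : ℝ, Measurable fun y : Fin n → ℝ => (Fin.cons a y : Fin (n + 1) → ℝ) :=
      fun a => mc.comp measurable_prodMk_left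
    rw [lint_succ hf, lint_succ hg, lint_succ hh]
    refine pl_one hs ht hst (hf.comp mc).lintegral_prod_right'
      (hg.comp mc).lintegral_prod_right' (hh.comp mc).lintegral_prod_right' fun a b => ?_
    refine ih (hf.comp (mc' _)) (hg.comp (mc' _)) (hh.comp (mc' _)) fun x y => ?_
    convert H (Fin.cons a x) (Fin.cons b y) using 2
    ext i
    refine Fin.cases ?_ (fun i => ?_) i <;> simp

theorem pl_euc {s t : ℝ} (hs : 0 < s) (ht : 0 < t) (hst : s + t = 1) (n : ℕ)
    {f g h : EuclideanSpace ℝ (Fin n) → ℝ≥0∞}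
    (hf : Measurable f) (hg : Measurable g) (hh : Measurable h)
    (H : ∀ x y, f x ^ s * g y ^ t ≤ h (s • x + t • y)) :
    (∫⁻ x, f x) ^ s * (∫⁻ x, g x) ^ t ≤ ∫⁻ x, h x := by
  have e := PiLp.volume_preserving_toLp (Fin n)
  rw [← e.lintegral_comp hf, ← e.lintegral_comp hg, ← e.lintegral_comp hh]
  exact pl_pi hs ht hst n (hf.comp e.measurable) (hg.comp e.measurable) (hh.comp e.measurable)
    fun x y => H _ _

/-! ### Concentration for strongly log-concave densities -/

/-- For a `ρ`-strongly log-concave probability density, Prékopa–Leindler with weights `s`, `t`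
applied to two oppositely tilted copies of the density. The tilts `a` and `-(s a / t)` are balanced
so that the exponential weights depend on `x i - y i` only, where completing the square against
`ρ s t ‖x - y‖² / 2` leaves a constant. -/
theorem mgf_product {n : ℕ} (i : Fin n) {ρ : ℝ} (hρ : 0 < ρ) {p : EuclideanSpace ℝ (Fin n) → ℝ}
    (pm : Measurable p) (p0 : ∀ x, 0 ≤ p x) (μ : Measure (EuclideanSpace ℝ (Fin n)))
    (hμ : μ = volume.withDensity fun x => ENNReal.ofReal (p x)) [IsProbabilityMeasure μ]
    (H : ∀ s t : ℝ, 0 < s → 0 < t → s + t = 1 → ∀ x y,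
      p x ^ s * p y ^ t * exp (ρ * s * t / 2 * ‖x - y‖ ^ 2) ≤ p (s • x + t • y))
    {s t : ℝ} (hs : 0 < s) (ht : 0 < t) (hst : s + t = 1) (a : ℝ) :
    (∫⁻ x, ENNReal.ofReal (exp (a * x i)) ∂μ) ^ s *
      (∫⁻ x, ENNReal.ofReal (exp (-(s * a / t) * x i)) ∂μ) ^ t
      ≤ ENNReal.ofReal (exp (s * a ^ 2 / (2 * ρ * t))) := by
  have mc : ∀ a : ℝ, Measurable fun x : EuclideanSpace ℝ (Fin n) => exp (a * x i) := by
    intro a; fun_prop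
  have W : ∀ a : ℝ, ∫⁻ x, ENNReal.ofReal (exp (a * x i)) ∂μ
      = ∫⁻ x, ENNReal.ofReal (p x * exp (a * x i)) := by
    intro a
    rw [hμ, lintegral_withDensity_eq_lintegral_mul _ pm.ennreal_ofReal (mc a).ennreal_ofReal]
    refine lintegral_congr fun x => ?_
    simp only [Pi.mul_apply]
    rw [ENNReal.ofReal_mul (p0 x)]
  have one : ∫⁻ x, ENNReal.ofReal (p x) = 1 := by
    have := measure_univ (μ := μ)
    rwa [hμ, withDensity_apply _ MeasurableSet.univ, setLIntegral_univ] at this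
  have R : ENNReal.ofReal (exp (s * a ^ 2 / (2 * ρ * t)))
      = ∫⁻ x, ENNReal.ofReal (exp (s * a ^ 2 / (2 * ρ * t)) * p x) := by
    simp_rw [ENNReal.ofReal_mul (exp_pos _).le]
    rw [lintegral_const_mul _ pm.ennreal_ofReal, one, mul_one]
  rw [W, W, R]
  refine pl_euc hs ht hst n (pm.mul (mc _)).ennreal_ofReal (pm.mul (mc _)).ennreal_ofReal
    (pm.const_mul _).ennreal_ofReal fun x y => ?_
  rw [ENNReal.ofReal_rpow_of_nonneg (mul_nonneg (p0 x) (exp_pos _).le) hs.le,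
    ENNReal.ofReal_rpow_of_nonneg (mul_nonneg (p0 y) (exp_pos _).le) ht.le,
    ← ENNReal.ofReal_mul (rpow_nonneg (mul_nonneg (p0 x) (exp_pos _).le) _),
    mul_rpow (p0 x) (exp_pos _).le, mul_rpow (p0 y) (exp_pos _).le, ← exp_mul, ← exp_mul]
  refine ENNReal.ofReal_le_ofReal ?_
  have q0 : 0 ≤ p x ^ s * p y ^ t := mul_nonneg (rpow_nonneg (p0 x) _) (rpow_nonneg (p0 y) _)
  have hd : (x i - y i) ^ 2 ≤ ‖x - y‖ ^ 2 := by
    have := PiLp.norm_apply_le (x - y) i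
    rw [← sq_abs]
    exact pow_le_pow_left₀ (abs_nonneg _) (by simpa using this) 2
  have hexp : a * x i * s + -(s * a / t) * y i * t
      ≤ s * a ^ 2 / (2 * ρ * t) + ρ * s * t / 2 * ‖x - y‖ ^ 2 := by
    have e : s * a ^ 2 / (2 * ρ * t) + ρ * s * t / 2 * (x i - y i) ^ 2
        - (a * x i * s + -(s * a / t) * y i * t)
        = s / (2 * ρ * t) * (a - ρ * t * (x i - y i)) ^ 2 := by
      field_simp; ring
    have : 0 ≤ s / (2 * ρ * t) * (a - ρ * t * (x i - y i)) ^ 2 := by positivity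
    have : ρ * s * t / 2 * (x i - y i) ^ 2 ≤ ρ * s * t / 2 * ‖x - y‖ ^ 2 := by gcongr
    linarith
  calc _ = p x ^ s * p y ^ t * exp (a * x i * s + -(s * a / t) * y i * t) := by
        rw [exp_add]; ring
    _ ≤ p x ^ s * p y ^ t * exp (s * a ^ 2 / (2 * ρ * t) + ρ * s * t / 2 * ‖x - y‖ ^ 2) := by
        gcongr
    _ = exp (s * a ^ 2 / (2 * ρ * t)) *
          (p x ^ s * p y ^ t * exp (ρ * s * t / 2 * ‖x - y‖ ^ 2)) := by
        rw [exp_add]; ring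
    _ ≤ _ := by gcongr; exact H s t hs ht hst x y

/-- Every coordinate is sub-Gaussian with the sharp variance proxy `1 / ρ`, for a `ρ`-strongly
log-concave probability density. -/
theorem hasSubgaussianMGF_coord {n : ℕ} (i : Fin n) {ρ : ℝ} (hρ : 0 < ρ)
    {p : EuclideanSpace ℝ (Fin n) → ℝ}
    (pm : Measurable p) (p0 : ∀ x, 0 ≤ p x) (μ : Measure (EuclideanSpace ℝ (Fin n)))
    (hμ : μ = volume.withDensity fun x => ENNReal.ofReal (p x)) [IsProbabilityMeasure μ]
    (H : ∀ s t : ℝ, 0 < s → 0 < t → s + t = 1 → ∀ x y,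
      p x ^ s * p y ^ t * exp (ρ * s * t / 2 * ‖x - y‖ ^ 2) ≤ p (s • x + t • y)) :
    ProbabilityTheory.HasSubgaussianMGF (fun x => x i - ∫ y, y i ∂μ) (ρ⁻¹).toNNReal μ := by
  have mc : ∀ a : ℝ, Measurable fun x : EuclideanSpace ℝ (Fin n) => exp (a * x i) := by
    intro a; fun_prop
  have pos : ∀ a : ℝ, ∫⁻ x, ENNReal.ofReal (exp (a * x i)) ∂μ ≠ 0 := by
    intro a h
    rw [lintegral_eq_zero_iff (mc a).ennreal_ofReal] at h
    obtain ⟨x, hx⟩ := h.exists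
    simp only [Pi.zero_apply, ENNReal.ofReal_eq_zero] at hx
    exact absurd hx (not_le.2 (exp_pos _))
  -- Equal weights suffice: one factor of the product is nonzero, hence the other is finite.
  have fin : ∀ a : ℝ, ∫⁻ x, ENNReal.ofReal (exp (a * x i)) ∂μ ≠ ⊤ := by
    intro a h
    have key := mgf_product i hρ pm p0 μ hμ H (s := 1 / 2) (t := 1 / 2) (by norm_num)
      (by norm_num) (by norm_num) a
    rw [h, ENNReal.top_rpow_of_pos (by norm_num), ENNReal.top_mul] at key
    · exact absurd key (by simp)
    · rw [Ne, ENNReal.rpow_eq_zero_iff_of_pos (by norm_num)]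
      exact pos _
  have int : ∀ a : ℝ, Integrable (fun x => exp (a * x i)) μ := fun a =>
    ⟨(mc a).aestronglyMeasurable, (hasFiniteIntegral_iff_ofReal
      (Filter.Eventually.of_forall fun x => (exp_pos _).le)).2 (fin a).lt_top⟩
  have int1 : Integrable (fun x : EuclideanSpace ℝ (Fin n) => x i) μ := by
    refine ProbabilityTheory.integrable_of_mem_interior_integrableExpSet ?_
    have : ProbabilityTheory.integrableExpSet (fun x : EuclideanSpace ℝ (Fin n) => x i) μ = univ :=
      eq_univ_of_forall int
    simp [this]
  set m := ∫ y, y i ∂μ with hm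
  -- Jensen's inequality, from the tangent line of the exponential.
  have jensen : ∀ b : ℝ, exp (b * m) ≤ ∫ x, exp (b * x i) ∂μ := by
    intro b
    have h1 : ∫ x, exp (b * m) * (1 + b * (x i - m)) ∂μ ≤ ∫ x, exp (b * x i) ∂μ := by
      refine integral_mono (by fun_prop) (int b) fun x => ?_
      have := add_one_le_exp (b * (x i - m))
      calc exp (b * m) * (1 + b * (x i - m)) ≤ exp (b * m) * exp (b * (x i - m)) := by
            gcongr; linarith
        _ = exp (b * x i) := by rw [← exp_add]; ring_nf
    have h2 : ∫ x, (1 + b * (x i - m)) ∂μ = 1 := by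
      rw [integral_add (by fun_prop) (by fun_prop), integral_const_mul,
        integral_sub int1 (by fun_prop)]
      simp [← hm]
    rwa [integral_const_mul, h2, mul_one] at h1
  have bound_t : ∀ a t : ℝ, 0 < t → t < 1 →
      ∫ x, exp (a * x i) ∂μ ≤ exp (a * m + a ^ 2 / (2 * ρ * t)) := by
    intro a t ht ht1
    have hs : 0 < 1 - t := by linarith
    have key := mgf_product i hρ pm p0 μ hμ H hs ht (by ring) a
    have conv : ∀ a : ℝ, ∫⁻ x, ENNReal.ofReal (exp (a * x i)) ∂μ
        = ENNReal.ofReal (∫ x, exp (a * x i) ∂μ) := fun a =>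
      (ofReal_integral_eq_lintegral_ofReal (int a)
        (Filter.Eventually.of_forall fun x => (exp_pos _).le)).symm
    have nn : ∀ a : ℝ, 0 ≤ ∫ x, exp (a * x i) ∂μ := fun a =>
      integral_nonneg fun x => (exp_pos _).le
    rw [conv, conv, ENNReal.ofReal_rpow_of_nonneg (nn _) hs.le,
      ENNReal.ofReal_rpow_of_nonneg (nn _) ht.le, ← ENNReal.ofReal_mul (rpow_nonneg (nn _) _),
      ENNReal.ofReal_le_ofReal_iff (exp_pos _).le] at key
    have j : exp (-((1 - t) * a * m)) ≤ (∫ x, exp (-((1 - t) * a / t) * x i) ∂μ) ^ t := by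
      calc exp (-((1 - t) * a * m)) = exp (-((1 - t) * a / t) * m) ^ t := by
            rw [← exp_mul]; congr 1; field_simp
        _ ≤ _ := rpow_le_rpow (exp_pos _).le (jensen _) ht.le
    have k2 : (∫ x, exp (a * x i) ∂μ) ^ (1 - t) * exp (-((1 - t) * a * m))
        ≤ exp ((1 - t) * a ^ 2 / (2 * ρ * t)) :=
      (mul_le_mul_of_nonneg_left j (rpow_nonneg (nn _) _)).trans key
    rw [exp_neg, ← div_eq_mul_inv, div_le_iff₀ (exp_pos _), ← exp_add] at k2
    refine (rpow_le_rpow_iff (nn _) (exp_pos _).le hs).1 (k2.trans_eq ?_)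
    rw [← exp_mul]; congr 1; field_simp; ring
  -- Only the limit `t → 1` (weight `s → 0` on the tilted copy) gives the sharp constant.
  have bound : ∀ a : ℝ, ∫ x, exp (a * x i) ∂μ ≤ exp (a * m + a ^ 2 / (2 * ρ)) := by
    intro a
    have c : ContinuousAt (fun t : ℝ => exp (a * m + a ^ 2 / (2 * ρ * t))) 1 := by
      refine continuous_exp.continuousAt.comp (continuousAt_const.add
        (continuousAt_const.div (by fun_prop) (by simpa using hρ.ne')))
    have l := c.tendsto.mono_left (nhdsWithin_le_nhds (s := Iio (1 : ℝ)))
    simp only [mul_one] at l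
    refine ge_of_tendsto l ?_
    filter_upwards [Ioo_mem_nhdsLT (zero_lt_one' ℝ)] with t ht
    exact bound_t a t ht.1 ht.2
  have split : ∀ a : ℝ, (fun x : EuclideanSpace ℝ (Fin n) => exp (a * (x i - m)))
      = fun x => exp (-(a * m)) * exp (a * x i) := by
    intro a; ext x; rw [← exp_add]; ring_nf
  refine ⟨fun a => ?_, fun a => ?_⟩
  · rw [split]; exact (int a).const_mul _
  · rw [ProbabilityTheory.mgf, split, integral_const_mul, Real.coe_toNNReal _ (inv_pos.2 hρ).le]
    calc _ ≤ exp (-(a * m)) * exp (a * m + a ^ 2 / (2 * ρ)) := by gcongr; exact bound a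
      _ = _ := by rw [← exp_add]; congr 1; field_simp; ring

/-! ### The interacting particle system -/

/-- **Gaussian concentration for Lipschitz functions**: for a Boltzmann–Gibbs measure
`μ` on `ℝⁿ` with `ρ`-convex confinement `V` and convex singular interaction `W`
(domain `(0,∞)`), the first (largest, since `μ` is supported in `{x₁ ≥ … ≥ xₙ}`) coordinate `x₁`
satisfies, for all `r > 0`, `μ(|x₁ - ∫ x₁ dμ| ≥ r) ≤ 2 exp(-ρ r²/2)`. -/
theorem gaussian_concentration_largest_particle
    {n : ℕ} (hn : 0 < n) (ρ : ℝ) (hρ : 0 < ρ)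
    (V : EuclideanSpace ℝ (Fin n) → ℝ) (W : ℝ → ℝ)
    (hV : ConvexOn ℝ Set.univ (fun x => V x - ρ / 2 * ‖x‖ ^ 2))
    (hW : ConvexOn ℝ (Set.Ioi (0 : ℝ)) W)
    (U : EuclideanSpace ℝ (Fin n) → ℝ)
    (hU : ∀ x, U x = V x + ∑ i : Fin n, ∑ j : Fin n, if i < j then W (x i - x j) else 0)
    (D : Set (EuclideanSpace ℝ (Fin n)))
    (hD : D = {x | ∀ i j : Fin n, i < j → x j < x i})
    (dens : EuclideanSpace ℝ (Fin n) → ℝ)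
    (hdens : dens = D.indicator fun x => Real.exp (-U x))
    (hint : Integrable dens volume)
    (Z : ℝ) (hZ : Z = ∫ x, dens x) (hZpos : 0 < Z)
    (μ : Measure (EuclideanSpace ℝ (Fin n)))
    (hμ : μ = volume.withDensity fun x => ENNReal.ofReal (dens x / Z))
    (r : ℝ) (hr : 0 < r) :
    μ {x | r ≤ |x ⟨0, hn⟩ - ∫ y, y ⟨0, hn⟩ ∂μ|}
      ≤ ENNReal.ofReal (2 * Real.exp (-ρ * r ^ 2 / 2)) := by
  have dnn : ∀ x, 0 ≤ dens x := fun x => by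
    rw [hdens]; exact indicator_nonneg (fun _ _ => (exp_pos _).le) x
  have Vm : Measurable V := by
    have h : Continuous fun x => V x - ρ / 2 * ‖x‖ ^ 2 := hV.locallyLipschitz.continuous
    have : Continuous V := by
      have := h.add (show Continuous fun x : EuclideanSpace ℝ (Fin n) => ρ / 2 * ‖x‖ ^ 2 by fun_prop)
      exact this.congr fun x => sub_add_cancel _ _
    exact this.measurable
  -- Off `(0, ∞)` nothing is known about `W`, so measurability is obtained for its truncation.
  have Wm : Measurable ((Ioi (0 : ℝ)).indicator W) := by
    rw [← piecewise_eq_indicator]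
    exact (hW.continuousOn isOpen_Ioi).measurable_piecewise continuousOn_const measurableSet_Ioi
  have Dm : MeasurableSet D := by
    rw [hD]
    simp only [ofPred_forall]
    exact MeasurableSet.iInter fun i => MeasurableSet.iInter fun j => MeasurableSet.iInter fun _ =>
      measurableSet_lt (by fun_prop) (by fun_prop)
  have dm : Measurable dens := by
    have e : dens = D.indicator fun x => exp (-(V x + ∑ i : Fin n, ∑ j : Fin n,
        if i < j then (Ioi (0 : ℝ)).indicator W (x i - x j) else 0)) := by
      rw [hdens]
      refine indicator_congr fun x hx => ?_
      rw [hU]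
      congr 3
      refine Finset.sum_congr rfl fun i _ => Finset.sum_congr rfl fun j _ => ?_
      split_ifs with hij
      · rw [hD] at hx
        rw [indicator_of_mem]
        exact sub_pos.2 (hx i j hij)
      · rfl
    rw [e]
    refine Measurable.indicator ?_ Dm
    refine (Vm.add (Finset.measurable_sum _ fun i _ => Finset.measurable_sum _ fun j _ => ?_)).neg.exp
    split_ifs
    · exact Wm.comp (by fun_prop)
    · exact measurable_const
  have prob : IsProbabilityMeasure μ := by
    constructor
    rw [hμ, withDensity_apply _ MeasurableSet.univ, setLIntegral_univ,
      ← ofReal_integral_eq_lintegral_ofReal (hint.div_const Z)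
        (Filter.Eventually.of_forall fun x => div_nonneg (dnn x) hZpos.le), integral_div, ← hZ,
      div_self hZpos.ne', ENNReal.ofReal_one]
  -- On `D` the potential `U` is `ρ`-convex; off the convex set `D` the density vanishes.
  have sg := hasSubgaussianMGF_coord ⟨0, hn⟩ hρ (dm.div_const Z)
    (fun x => div_nonneg (dnn x) hZpos.le) μ hμ (by
      intro s t hs ht hst x y
      have hz : Z ^ s * Z ^ t = Z := by rw [← rpow_add hZpos, hst, rpow_one]
      rw [div_rpow (dnn x) hZpos.le, div_rpow (dnn y) hZpos.le, div_mul_div_comm, hz,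
        div_mul_eq_mul_div]
      gcongr
      by_cases hx : x ∈ D
      swap
      · simp [hdens, hx, zero_rpow hs.ne', indicator_nonneg, (exp_pos _).le]
      by_cases hy : y ∈ D
      swap
      · simp [hdens, hy, zero_rpow ht.ne', indicator_nonneg, (exp_pos _).le]
      have hxD := hx
      have hyD := hy
      rw [hD] at hxD hyD
      have hz : s • x + t • y ∈ D := by
        rw [hD]
        intro i j hij
        have h1 := mul_lt_mul_of_pos_left (hxD i j hij) hs
        have h2 := mul_lt_mul_of_pos_left (hyD i j hij) ht
        simpa using add_lt_add h1 h2
      rw [hdens, indicator_of_mem hx, indicator_of_mem hy, indicator_of_mem hz, ← exp_mul,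
        ← exp_mul, ← exp_add, ← exp_add, exp_le_exp]
      have hVs := (strongConvexOn_iff_convex.2 hV).2 (mem_univ x) (mem_univ y) hs.le ht.le hst
      have hWs : (∑ i : Fin n, ∑ j : Fin n,
            if i < j then W ((s • x + t • y) i - (s • x + t • y) j) else 0)
          ≤ s * (∑ i : Fin n, ∑ j : Fin n, if i < j then W (x i - x j) else 0)
            + t * (∑ i : Fin n, ∑ j : Fin n, if i < j then W (y i - y j) else 0) := by
        simp only [Finset.mul_sum, ← Finset.sum_add_distrib]
        refine Finset.sum_le_sum fun i _ => Finset.sum_le_sum fun j _ => ?_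
        split_ifs with hij
        · have := hW.2 (sub_pos.2 (hxD i j hij)) (sub_pos.2 (hyD i j hij)) hs.le ht.le hst
          simp only [smul_eq_mul] at this
          convert this using 2
          simp
          ring
        · simp
      rw [hU, hU, hU]
      simp only [smul_eq_mul] at hVs
      nlinarith [hVs, hWs])
  set m := ∫ y, y ⟨0, hn⟩ ∂μ
  have ex : -r ^ 2 / (2 * ((ρ⁻¹).toNNReal : ℝ)) = -ρ * r ^ 2 / 2 := by
    rw [Real.coe_toNNReal _ (inv_pos.2 hρ).le]; field_simp
  have h1 := sg.measure_ge_le hr.le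
  have h2 := sg.neg.measure_ge_le hr.le
  rw [ex] at h1 h2
  rw [ENNReal.le_ofReal_iff_toReal_le (measure_ne_top _ _) (by positivity), two_mul]
  refine le_trans ?_ (add_le_add h1 h2)
  refine le_trans (measureReal_mono ?_) (measureReal_union_le _ _)
  intro x hx
  rcases le_abs.1 (show r ≤ |x ⟨0, hn⟩ - m| from hx) with h | h
  · exact Or.inl h
  · exact Or.inr h
end

section
/- Let μ be the beta Hermite ensemble on ℝⁿ with density proportional to e^{−(n/2)|x|²} ∏_{i<j}(x_i − x_j)^β on {x₁ ≥ … ≥ xₙ}, β > 0, and let μ̃ be its symmetrization, i.e., the probability measure on ℝⁿ with density (n! Z_μ)^{-1} e^{−(n/2)|x|²} ∏_{i<j} |x_i − x_j|^β. Then for all 1 ≤ i ≠ j ≤ n: ∫ x_i dμ̃ = 0, ∫ x_i² dμ̃ = β/2 + (2−β)/(2n), and ∫ x_i x_j dμ̃ = −β/(2n). -/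
/-! The weight `e^{-(n/2)|x|²} ∏_{i<j} |xᵢ - xⱼ|^β` is even and invariant under permutations of the
coordinates. Evenness kills the first moments, and exchangeability reduces the second moments to two
unknowns, `a = ∫ xᵢ²` and `c = ∫ xᵢ xⱼ` for `i ≠ j`. Two linear functionals of `(a, c)` are
explicit.

* The interaction `∏_{i<j} |xᵢ - xⱼ|^β` is homogeneous of degree `β n(n-1)/2`, so a dilation gives
  `∫ e^{t|x|²} dμ̃ = (1 - 2t/n)^{-(n + β n(n-1)/2)/2}` for `t < n/2`. Differentiating at `t = 0`,
  `n a = ∫ |x|² dμ̃ = 1 + β(n-1)/2` (`integral_norm_sq_betaHermite`).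
* The interaction is invariant under translation along `(1, …, 1)`, so completing the square gives
  `∫ e^{t ∑ xᵢ} dμ̃ = e^{t²/2}`, and `n a + n(n-1) c = ∫ (∑ xᵢ)² dμ̃ = 1`
  (`integral_sum_sq_betaHermite`).

Differentiation under the integral sign is supplied by the analyticity of moment generating functions
in the interior of their domain. -/

open MeasureTheory Real Set
open scoped ENNReal BigOperators

namespace BetaHermite

open ProbabilityTheory

variable {n : ℕ}

/-! ### Symmetries of the weight -/

/-- The interaction `∏_{i<j} |xᵢ - xⱼ|^β`. -/
noncomputable def interaction (β : ℝ) (x : EuclideanSpace ℝ (Fin n)) : ℝ :=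
  ∏ i : Fin n, ∏ j : Fin n, if i < j then |x i - x j| ^ β else 1

/-- The unnormalized density of the symmetrized beta Hermite ensemble. -/
noncomputable def weight (β : ℝ) (x : EuclideanSpace ℝ (Fin n)) : ℝ :=
  Real.exp (-(n / 2 : ℝ) * ‖x‖ ^ 2) * interaction β x

/-- The probability measure with density proportional to `weight β`. It is the zero measure when the
total mass `∫ weight β` is zero or the weight is not integrable. -/
noncomputable def law (n : ℕ) (β : ℝ) : Measure (EuclideanSpace ℝ (Fin n)) :=
  volume.withDensity fun x => ENNReal.ofReal (weight β x / ∫ y, weight (n := n) β y)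

/-- A product over `i < j` of a symmetric family squares to a product over all `i ≠ j`. This turns
the ordered product into one that is visibly permutation invariant. -/
lemma prod_lt_sq (f : Fin n → Fin n → ℝ) (hf : ∀ i j, f i j = f j i) :
    (∏ i, ∏ j, if i < j then f i j else 1) ^ 2 = ∏ i, ∏ j, if i ≠ j then f i j else 1 := by
  rw [sq]
  nth_rewrite 2 [Finset.prod_comm]
  simp_rw [← Finset.prod_mul_distrib]
  refine Finset.prod_congr rfl fun i _ => Finset.prod_congr rfl fun j _ => ?_
  rcases lt_trichotomy i j with h | h | h
  · simp [h, h.ne, h.not_gt]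
  · simp [h]
  · simp [h, h.ne', h.not_gt, hf j i]

lemma interaction_nonneg (β : ℝ) (x : EuclideanSpace ℝ (Fin n)) : 0 ≤ interaction β x := by
  refine Finset.prod_nonneg fun i _ => Finset.prod_nonneg fun j _ => ?_
  split_ifs <;> positivity

lemma weight_nonneg (β : ℝ) (x : EuclideanSpace ℝ (Fin n)) : 0 ≤ weight β x :=
  mul_nonneg (Real.exp_nonneg _) (interaction_nonneg β x)

lemma measurable_weight (β : ℝ) : Measurable (weight (n := n) β) := by
  unfold weight interaction
  refine Measurable.mul (by fun_prop) ?_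
  refine Finset.measurable_fun_prod _ fun i _ => Finset.measurable_fun_prod _ fun j _ => ?_
  split_ifs
  · have : Measurable fun x : EuclideanSpace ℝ (Fin n) => |x i - x j| :=
      (by fun_prop : Continuous fun x : EuclideanSpace ℝ (Fin n) => |x i - x j|).measurable
    exact this.pow_const β
  · exact measurable_const

lemma interaction_perm (β : ℝ) (σ : Equiv.Perm (Fin n)) (x y : EuclideanSpace ℝ (Fin n))
    (h : ∀ i, y i = x (σ i)) : interaction β y = interaction β x := by
  have hs : ∀ z : EuclideanSpace ℝ (Fin n), interaction β z ^ 2 =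
      ∏ i, ∏ j, if i ≠ j then |z i - z j| ^ β else 1 := fun z =>
    prod_lt_sq (fun i j => |z i - z j| ^ β) fun i j => by rw [abs_sub_comm]
  rw [← sq_eq_sq₀ (interaction_nonneg β y) (interaction_nonneg β x), hs, hs,
    ← Equiv.prod_comp σ fun i => ∏ j, if i ≠ j then |x i - x j| ^ β else 1]
  refine Finset.prod_congr rfl fun i _ => ?_
  rw [← Equiv.prod_comp σ fun j => if σ i ≠ j then |x (σ i) - x j| ^ β else 1]
  refine Finset.prod_congr rfl fun j _ => ?_
  simp [h]

/-- The interaction is homogeneous of degree `β n(n-1)/2`. -/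
lemma interaction_smul (β : ℝ) {r : ℝ} (hr : 0 < r) (x : EuclideanSpace ℝ (Fin n)) :
    interaction β (r • x) = r ^ (β * (n * (n - 1)) / 2) * interaction β x := by
  have hc : (∏ i : Fin n, ∏ j : Fin n, if i < j then r ^ β else 1)
      = r ^ (β * (n * (n - 1)) / 2) := by
    rw [← sq_eq_sq₀ (Finset.prod_nonneg fun i _ => Finset.prod_nonneg fun j _ => by
      split_ifs <;> positivity) (by positivity), prod_lt_sq (fun _ _ => r ^ β) (fun _ _ => rfl)]
    have : ∀ i : Fin n, (∏ j : Fin n, if i ≠ j then r ^ β else 1) = r ^ (β * (n - 1)) := by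
      intro i
      rw [Finset.prod_ite, Finset.prod_const_one, mul_one, Finset.prod_const,
        Finset.filter_ne, Finset.card_erase_of_mem (Finset.mem_univ i), Finset.card_univ,
        Fintype.card_fin, ← Real.rpow_mul_natCast hr.le, Nat.cast_sub (by have := i.pos; omega)]
      simp
    simp_rw [this]
    rw [Finset.prod_const, Finset.card_univ, Fintype.card_fin, ← Real.rpow_mul_natCast hr.le,
      ← Real.rpow_mul_natCast hr.le]
    congr 1
    push_cast
    ring
  rw [← hc, interaction, interaction]
  simp_rw [← Finset.prod_mul_distrib]
  refine Finset.prod_congr rfl fun i _ => Finset.prod_congr rfl fun j _ => ?_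
  split_ifs
  · rw [← Real.mul_rpow hr.le (abs_nonneg _)]
    congr 1
    rw [PiLp.smul_apply, PiLp.smul_apply, smul_eq_mul, smul_eq_mul, ← mul_sub, abs_mul,
      abs_of_pos hr]
  · simp

lemma weight_neg (β : ℝ) (x : EuclideanSpace ℝ (Fin n)) : weight β (-x) = weight β x := by
  simp only [weight, interaction, norm_neg, PiLp.neg_apply]
  congr 1
  refine Finset.prod_congr rfl fun i _ => Finset.prod_congr rfl fun j _ => ?_
  rw [show -x i - -x j = -(x i - x j) by ring, abs_neg]

lemma exp_norm_mul_weight (hn : 0 < n) (β : ℝ) {t : ℝ} (ht : t < n / 2)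
    (x : EuclideanSpace ℝ (Fin n)) :
    weight β x * Real.exp (t * ‖x‖ ^ 2) =
      √(1 - 2 * t / n) ^ (-(β * (n * (n - 1)) / 2)) * weight β (√(1 - 2 * t / n) • x) := by
  have hn' : (0 : ℝ) < n := by exact_mod_cast hn
  have hpos : 0 < 1 - 2 * t / n := by
    rw [sub_pos, div_lt_one hn']; linarith
  have hr : 0 < √(1 - 2 * t / n) := Real.sqrt_pos.2 hpos
  rw [weight, weight, interaction_smul β hr, norm_smul, mul_pow, Real.norm_eq_abs, sq_abs,
    Real.sq_sqrt hpos.le, Real.rpow_neg hr.le]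
  have h1 : Real.exp (-(n / 2 : ℝ) * ((1 - 2 * t / n) * ‖x‖ ^ 2))
      = Real.exp (-(n / 2 : ℝ) * ‖x‖ ^ 2) * Real.exp (t * ‖x‖ ^ 2) := by
    rw [← Real.exp_add]
    congr 1
    field_simp
    ring
  rw [h1]
  have : √(1 - 2 * t / n) ^ (β * (n * (n - 1)) / 2) ≠ 0 := (Real.rpow_pos_of_pos hr _).ne'
  generalize √(1 - 2 * t / n) ^ (β * (n * (n - 1)) / 2) = c at this ⊢
  field_simp

/-- Completing the square along the direction `(1, …, 1)`, in which the interaction is invariant. -/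
lemma exp_sum_mul_weight (hn : 0 < n) (β t : ℝ) (x : EuclideanSpace ℝ (Fin n)) :
    weight β x * Real.exp (t * ∑ i, x i) =
      Real.exp (t ^ 2 / 2) * weight β (x - WithLp.toLp 2 fun _ => t / n) := by
  have hn' : (n : ℝ) ≠ 0 := by exact_mod_cast hn.ne'
  have hv : interaction β (x - WithLp.toLp 2 fun _ => t / n) = interaction β x := by
    simp [interaction]
  rw [weight, weight, hv, mul_right_comm, ← Real.exp_add, ← mul_assoc, ← Real.exp_add]
  congr 2
  simp only [EuclideanSpace.real_norm_sq_eq, PiLp.sub_apply, sub_sq, Finset.sum_add_distrib,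
    Finset.sum_sub_distrib, Finset.sum_const, Finset.card_univ, Fintype.card_fin, nsmul_eq_mul,
    ← Finset.sum_mul, ← Finset.mul_sum]
  field_simp
  ring

/-! ### Integration against the law -/

variable {β : ℝ}

lemma integral_law (f : EuclideanSpace ℝ (Fin n) → ℝ) :
    ∫ x, f x ∂(law n β) =
      (∫ y, weight (n := n) β y)⁻¹ * ∫ x, weight β x * f x := by
  have hZ : 0 ≤ ∫ y, weight (n := n) β y := integral_nonneg (weight_nonneg β)
  rw [law, integral_withDensity_eq_integral_toReal_smul
    ((measurable_weight β).div_const _).ennreal_ofReal (by simp), ← integral_const_mul]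
  congr with x
  rw [ENNReal.toReal_ofReal (div_nonneg (weight_nonneg β x) hZ), smul_eq_mul]
  ring

lemma integrable_law {f : EuclideanSpace ℝ (Fin n) → ℝ}
    (hf : Integrable (fun x => weight β x * f x) volume) : Integrable f (law n β) := by
  have hZ : 0 ≤ ∫ y, weight (n := n) β y := integral_nonneg (weight_nonneg β)
  rw [law, integrable_withDensity_iff_integrable_smul'
    ((measurable_weight β).div_const _).ennreal_ofReal (by simp)]
  refine (hf.const_mul (∫ y, weight (n := n) β y)⁻¹).congr (ae_of_all _ fun x => ?_)
  simp only
  rw [ENNReal.toReal_ofReal (div_nonneg (weight_nonneg β x) hZ), smul_eq_mul]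
  ring

lemma integral_comp_isometry
    (U : EuclideanSpace ℝ (Fin n) ≃ₗᵢ[ℝ] EuclideanSpace ℝ (Fin n))
    (hU : ∀ x, weight β (U x) = weight β x) (f : EuclideanSpace ℝ (Fin n) → ℝ) :
    ∫ x, f (U x) ∂(law n β) = ∫ x, f x ∂(law n β) := by
  rw [integral_law, integral_law]
  congr 1
  rw [← U.measurePreserving.integral_comp U.toHomeomorph.measurableEmbedding
    (fun x => weight β x * f x)]
  simp [hU]

/-- The law is exchangeable. -/
lemma integral_comp_perm (σ : Equiv.Perm (Fin n)) (f : (Fin n → ℝ) → ℝ) :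
    ∫ x, f (fun i => x (σ i)) ∂(law n β) = ∫ x, f (fun i => x i) ∂(law n β) := by
  have happ : ∀ (x : EuclideanSpace ℝ (Fin n)) i,
      LinearIsometryEquiv.piLpCongrLeft 2 ℝ ℝ σ.symm x i = x (σ i) := fun x i => by
    simp [LinearIsometryEquiv.piLpCongrLeft_apply, Equiv.piCongrLeft']
  rw [← integral_comp_isometry (LinearIsometryEquiv.piLpCongrLeft 2 ℝ ℝ σ.symm) (fun x => ?_)
    (fun x => f fun i => x i)]
  · simp only [happ]
  · rw [weight, weight, LinearIsometryEquiv.norm_map, interaction_perm β σ _ _ (happ x)]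

/-! ### Generating functions of `|x|²` and `∑ xᵢ` -/

/-- A dilation evaluates the moment generating function of `|x|²`. -/
lemma mgf_norm_sq (hn : 0 < n) (hZ : 0 < ∫ y, weight (n := n) β y) {t : ℝ} (ht : t < n / 2) :
    mgf (fun x => ‖x‖ ^ 2) (law n β) t =
      (1 - 2 * t / n) ^ (-(n + β * (n * (n - 1)) / 2) / 2) := by
  have hn' : (0 : ℝ) < n := by exact_mod_cast hn
  have hpos : 0 < 1 - 2 * t / n := by
    rw [sub_pos, div_lt_one hn']; linarith
  have hr : 0 < √(1 - 2 * t / n) := Real.sqrt_pos.2 hpos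
  rw [mgf, integral_law]
  simp_rw [exp_norm_mul_weight hn β ht]
  rw [integral_const_mul, Measure.integral_comp_smul, finrank_euclideanSpace, Fintype.card_fin,
    abs_of_nonneg (by positivity), smul_eq_mul, ← Real.rpow_natCast, ← Real.rpow_neg hr.le]
  rw [show ∀ a b c : ℝ, c⁻¹ * (a * (b * c)) = a * b * (c⁻¹ * c) by intros; ring,
    inv_mul_cancel₀ hZ.ne', mul_one, ← Real.rpow_add hr, Real.sqrt_eq_rpow,
    ← Real.rpow_mul hpos.le]
  congr 1
  ring

lemma zero_mem_interior_norm_sq (hn : 0 < n) (hint : Integrable (weight (n := n) β) volume) :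
    0 ∈ interior (integrableExpSet (fun x => ‖x‖ ^ 2) (law n β)) := by
  have hn' : (0 : ℝ) < n := by exact_mod_cast hn
  rw [mem_interior]
  refine ⟨Set.Iio (n / 2 : ℝ), fun t ht => integrable_law ?_, isOpen_Iio, by simpa using hn⟩
  simp_rw [exp_norm_mul_weight hn β ht]
  have hpos : 0 < 1 - 2 * t / n := by
    rw [sub_pos, div_lt_one hn']; linarith [Set.mem_Iio.1 ht]
  exact (hint.comp_smul (Real.sqrt_pos.2 hpos).ne').const_mul _

lemma integral_norm_sq_betaHermite (hn : 0 < n) (hint : Integrable (weight (n := n) β) volume)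
    (hZ : 0 < ∫ y, weight (n := n) β y) :
    ∫ x, ‖x‖ ^ 2 ∂(law n β) = 1 + β * (n - 1) / 2 := by
  have hn' : (0 : ℝ) < n := by exact_mod_cast hn
  rw [← deriv_mgf_zero (zero_mem_interior_norm_sq hn hint)]
  have h1 : mgf (fun x => ‖x‖ ^ 2) (law n β) =ᶠ[nhds 0] fun t : ℝ =>
      (1 - 2 * t / n) ^ (-(n + β * (n * (n - 1)) / 2) / 2) := by
    filter_upwards [Iio_mem_nhds (by positivity : (0 : ℝ) < n / 2)] with t ht
    exact mgf_norm_sq hn hZ ht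
  rw [h1.deriv_eq]
  have h2 : HasDerivAt (fun t : ℝ => 1 - 2 * t / n) (-(2 / n)) 0 := by
    simpa using (((hasDerivAt_id (0 : ℝ)).const_mul 2).div_const (n : ℝ)).const_sub 1
  rw [(h2.rpow_const (p := -(n + β * (n * (n - 1)) / 2) / 2) (Or.inl (by simp))).deriv]
  simp only [mul_zero, zero_div, sub_zero, Real.one_rpow, mul_one]
  field_simp

lemma zero_mem_interior_sum (hn : 0 < n) (hint : Integrable (weight (n := n) β) volume) :
    0 ∈ interior (integrableExpSet (fun x : EuclideanSpace ℝ (Fin n) => ∑ i, x i) (law n β)) := by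
  have : integrableExpSet (fun x : EuclideanSpace ℝ (Fin n) => ∑ i, x i) (law n β) = Set.univ := by
    refine Set.eq_univ_of_forall fun t => integrable_law ?_
    simp_rw [exp_sum_mul_weight hn β t]
    exact (hint.comp_sub_right _).const_mul _
  simp [this]

lemma integral_sum_sq_betaHermite (hn : 0 < n) (hint : Integrable (weight (n := n) β) volume)
    (hZ : 0 < ∫ y, weight (n := n) β y) :
    ∫ x, (∑ i, x i) ^ 2 ∂(law n β) = 1 := by
  have h1 : mgf (fun x : EuclideanSpace ℝ (Fin n) => ∑ i, x i) (law n β) =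
      fun t : ℝ => Real.exp (t ^ 2 / 2) := by
    ext t
    rw [mgf, integral_law]
    simp_rw [exp_sum_mul_weight hn β t]
    rw [integral_const_mul, integral_sub_right_eq_self (weight (n := n) β)]
    field_simp
  have h2 := iteratedDeriv_mgf_zero (zero_mem_interior_sum hn hint) 2
  have hd : ∀ t : ℝ, HasDerivAt (fun t : ℝ => Real.exp (t ^ 2 / 2)) (t * Real.exp (t ^ 2 / 2)) t := by
    intro t
    have := (((hasDerivAt_id t).pow 2).div_const 2).exp
    convert! this using 1
    simp
    ring
  have hd2 := (hasDerivAt_id (0 : ℝ)).mul (hd 0)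
  rw [h1, iteratedDeriv_succ, iteratedDeriv_one, funext fun t => (hd t).deriv] at h2
  simp only [Pi.pow_apply] at h2
  rw [← h2]
  refine hd2.deriv.trans ?_
  simp

/-! ### Coordinate moments by exchangeability -/

lemma integrable_coord_mul (hn : 0 < n) (hint : Integrable (weight (n := n) β) volume)
    (i j : Fin n) : Integrable (fun x : EuclideanSpace ℝ (Fin n) => x i * x j) (law n β) := by
  have h := integrable_pow_of_mem_interior_integrableExpSet
    (zero_mem_interior_norm_sq hn hint) 1
  refine h.mono' (by fun_prop) (ae_of_all _ fun x => ?_)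
  rw [norm_mul, pow_one, sq]
  exact mul_le_mul (PiLp.norm_apply_le x i) (PiLp.norm_apply_le x j) (norm_nonneg _) (norm_nonneg _)

lemma integral_coord (i : Fin n) : ∫ x, x i ∂(law n β) = 0 := by
  have h := integral_comp_isometry (LinearIsometryEquiv.neg ℝ) (weight_neg β) fun x => x i
  simp only [LinearIsometryEquiv.coe_neg, PiLp.neg_apply, integral_neg] at h
  linarith

lemma integral_coord_sq (hn : 0 < n) (hint : Integrable (weight (n := n) β) volume)
    (hZ : 0 < ∫ y, weight (n := n) β y) (i : Fin n) :
    ∫ x, x i ^ 2 ∂(law n β) = β / 2 + (2 - β) / (2 * n) := by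
  have hn' : (0 : ℝ) < n := by exact_mod_cast hn
  have h := integral_norm_sq_betaHermite hn hint hZ
  simp_rw [EuclideanSpace.real_norm_sq_eq] at h
  rw [integral_finsetSum _ fun k _ => by
    simpa only [sq] using integrable_coord_mul hn hint k k] at h
  have hk : ∀ k, ∫ x, x k ^ 2 ∂(law n β) = ∫ x, x i ^ 2 ∂(law n β) := fun k => by
    have := integral_comp_perm (β := β) (Equiv.swap i k) fun y => y i ^ 2
    simpa using this
  simp only [hk, Finset.sum_const, Finset.card_univ, Fintype.card_fin, nsmul_eq_mul] at h
  field_simp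
  linarith

lemma integral_coord_mul (hn : 0 < n) (hint : Integrable (weight (n := n) β) volume)
    (hZ : 0 < ∫ y, weight (n := n) β y) {i j : Fin n} (hij : i ≠ j) :
    ∫ x, x i * x j ∂(law n β) = -β / (2 * n) := by
  have hn' : (0 : ℝ) < n := by exact_mod_cast hn
  have hn1 : (0 : ℝ) < n - 1 := by
    have : 1 < n := by
      by_contra h
      exact hij (Fin.ext (by omega))
    rw [sub_pos]
    exact_mod_cast this
  have h := integral_sum_sq_betaHermite hn hint hZ
  simp_rw [sq, Finset.sum_mul_sum] at h
  rw [integral_finsetSum _ fun k _ => integrable_finsetSum _ fun l _ =>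
    integrable_coord_mul hn hint k l] at h
  simp_rw [integral_finsetSum Finset.univ fun l _ => integrable_coord_mul hn hint _ l] at h
  have hk : ∀ k l, ∫ x, x k * x l ∂(law n β) =
      if k = l then β / 2 + (2 - β) / (2 * n) else ∫ x, x i * x j ∂(law n β) := by
    intro k l
    split_ifs with hkl
    · simp_rw [← hkl, ← sq, integral_coord_sq hn hint hZ]
    · -- A permutation carrying `(i, j)` to `(k, l)`.
      have := integral_comp_perm (β := β) (Equiv.swap (Equiv.swap i k j) l * Equiv.swap i k)
        fun y => y i * y j
      have hne : k ≠ Equiv.swap i k j := fun h => hij <| by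
        simpa using congrArg (Equiv.swap i k) h
      simpa [Equiv.swap_apply_of_ne_of_ne hne hkl] using this
  have hrow : ∀ k : Fin n, ∑ l, ∫ x, x k * x l ∂(law n β) =
      (β / 2 + (2 - β) / (2 * n)) + (n - 1) * ∫ x, x i * x j ∂(law n β) := by
    intro k
    rw [← Finset.add_sum_erase _ _ (Finset.mem_univ k), hk k k, if_pos rfl,
      Finset.sum_congr rfl fun l hl => (hk k l).trans (if_neg (Finset.ne_of_mem_erase hl).symm),
      Finset.sum_const, Finset.card_erase_of_mem (Finset.mem_univ k), Finset.card_univ,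
      Fintype.card_fin, nsmul_eq_mul, Nat.cast_sub (by omega), Nat.cast_one]
  simp only [hrow, Finset.sum_const, Finset.card_univ, Fintype.card_fin, nsmul_eq_mul] at h
  field_simp at h ⊢
  have : (n - 1 : ℝ) * (2 * n * ∫ x, x i * x j ∂(law n β)) = (n - 1) * -β := by linarith
  linarith [mul_left_cancel₀ hn1.ne' this]

end BetaHermite

/-- **Isotropy of the symmetrized beta Hermite ensemble**: the symmetrization `μ̃` of the
beta Hermite ensemble, i.e. the probability measure on `ℝⁿ` with density proportional to
`exp(-(n/2)|x|²) ∏_{i<j} |xᵢ - xⱼ|^β`, satisfies for all `i ≠ j`: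
`∫ xᵢ dμ̃ = 0`, `∫ xᵢ² dμ̃ = β/2 + (2-β)/(2n)` and `∫ xᵢxⱼ dμ̃ = -β/(2n)`. -/
theorem symmetrized_beta_hermite_moments
    {n : ℕ} (hn : 0 < n) (β : ℝ) (hβ : 0 < β)
    (dens : EuclideanSpace ℝ (Fin n) → ℝ)
    (hdens : dens = fun x =>
      Real.exp (-(n / 2 : ℝ) * ‖x‖ ^ 2) *
        ∏ i : Fin n, ∏ j : Fin n, if i < j then |x i - x j| ^ β else 1)
    (hint : Integrable dens volume)
    (Z : ℝ) (hZ : Z = ∫ x, dens x) (hZpos : 0 < Z)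
    (μt : Measure (EuclideanSpace ℝ (Fin n)))
    (hμt : μt = volume.withDensity fun x => ENNReal.ofReal (dens x / Z)) :
    (∀ i : Fin n, ∫ x, x i ∂μt = 0)
    ∧ (∀ i : Fin n, ∫ x, (x i) ^ 2 ∂μt = β / 2 + (2 - β) / (2 * n))
    ∧ (∀ i j : Fin n, i ≠ j → ∫ x, x i * x j ∂μt = -β / (2 * n)) := by
  obtain rfl : dens = BetaHermite.weight β := hdens
  subst hZ
  obtain rfl : μt = BetaHermite.law n β := hμt
  exact ⟨BetaHermite.integral_coord, BetaHermite.integral_coord_sq hn hint hZpos,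
    fun i j hij => BetaHermite.integral_coord_mul hn hint hZpos hij⟩
end
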